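/- Under the correctly specified model, with the specific tuning choices λ_n = c₁ σ [r_n² + r_n √(log(ep)/n)] and μ_n = c₂ σ² [r_n² + log(ep)/n] + c₂ λ_n Ω_gr(f°) (where c₁, c₂ are the constants from the corollary), there is a constant C depending only on σ, Ω_gr(f°) and K such that, with probability at least 1 − 1/p, the prediction error satisfies ‖f̂ − f*‖²_n ≤ C [ n^{−2/3} + log(ep)/n ]. -/

import Mathlib

open MeasureTheory ProbabilityTheory

noncomputable section

namespace Census

structure AddRep (p : ℕ) where
  main : Fin p → ℝ → ℝ
  inter : Fin p → Fin p → ℝ → ℝ → ℝ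
  smooth_main : ∀ j, ContDiff ℝ 2 (main j)
  smooth_inter : ∀ j k, ContDiff ℝ 2 (fun q : ℝ × ℝ => inter j k q.1 q.2)

namespace AddRep
variable {p : ℕ}

def toFun (R : AddRep p) (x : Fin p → ℝ) : ℝ :=
  (∑ j, R.main j (x j)) + ∑ j, ∑ k, if j < k then R.inter j k (x j) (x k) else 0

def Gcount (R : AddRep p) : ℕ :=
  Nat.card {j : Fin p // R.main j ≠ 0} +
    Nat.card {q : Fin p × Fin p // q.1 < q.2 ∧ R.inter q.1 q.2 ≠ 0}

end AddRep

def Omega1 (h : ℝ → ℝ) : ℝ := ∫ u in (0:ℝ)..1, (iteratedDeriv 2 h u) ^ 2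

def Omega2 (g : ℝ → ℝ → ℝ) : ℝ :=
  ∫ q in (Set.Icc (0:ℝ) 1) ×ˢ (Set.Icc (0:ℝ) 1),
    ((iteratedDeriv 2 (fun t => g t q.2) q.1) ^ 2
      + (deriv (fun t => deriv (g t) q.2) q.1) ^ 2
      + (iteratedDeriv 2 (g q.1) q.2) ^ 2)

def OmegaGr {p : ℕ} (R : AddRep p) : ℝ :=
  (∑ j, Omega1 (R.main j)) + ∑ j, ∑ k, if j < k then Omega2 (R.inter j k) else 0

def OmegaTildeGr {p : ℕ} (R : AddRep p) : ℝ :=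
  (∑ j, Real.sqrt (Omega1 (R.main j))) +
    ∑ j, ∑ k, if j < k then Real.sqrt (Omega2 (R.inter j k)) else 0

def evalVec {n p : ℕ} (x : Fin n → Fin p → ℝ) (R : AddRep p) : Fin n → ℝ :=
  fun i => R.toFun (x i)

def normSqN {n : ℕ} (v : Fin n → ℝ) : ℝ := (1 / n) * ∑ i, v i ^ 2

def normN {n : ℕ} (v : Fin n → ℝ) : ℝ := Real.sqrt (normSqN v)

def innerN {n : ℕ} (u v : Fin n → ℝ) : ℝ := (1 / n) * ∑ i, u i * v i

def objective {n p : ℕ} (x : Fin n → Fin p → ℝ) (y : Fin n → ℝ) (lam mu : ℝ)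
    (R : AddRep p) : ℝ :=
  normSqN (fun i => y i - evalVec x R i) + lam * OmegaGr R + mu * (R.Gcount : ℝ)

def IsMinimizer {n p : ℕ} (K : ℕ) (x : Fin n → Fin p → ℝ) (y : Fin n → ℝ)
    (lam mu : ℝ) (Rhat : AddRep p) : Prop :=
  Rhat.Gcount ≤ K ∧ ∀ R : AddRep p, R.Gcount ≤ K →
    objective x y lam mu Rhat ≤ objective x y lam mu R

def rn (n : ℕ) : ℝ := (n : ℝ) ^ (-(1/3) : ℝ)

def logep (p : ℕ) : ℝ := Real.log (Real.exp 1 * p)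

def gaussMeasure (n : ℕ) (σ : ℝ) : Measure (Fin n → ℝ) :=
  Measure.pi fun _ : Fin n => gaussianReal 0 ⟨σ ^ 2, sq_nonneg σ⟩

end Census

/-!
Writing `Δ` for the difference of the estimator and the truth, minimality gives the basic inequality
`‖Δ‖ₙ² + λ Ω_gr(f̂) ≤ 2⟨ε, Δ⟩ₙ + λ Ω_gr(f°) + μ G(f°)`, so everything rests on a bound for `⟨ε, Δ⟩ₙ`
that holds simultaneously for all differences `Δ` of sparse additive functions and on arbitrary
designs.

For a single pair of variables, subdivide the unit square dyadically (Birman–Solomyak) until the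
proportion of the design in each square is at most `16 ^ (-m)` divided by its area. There are at
most `8 * 4 ^ m` nonempty squares of this kind, and replacing a function of roughness `Ω` by its
averaged Taylor polynomial on each of them splits its values on the design into a piecewise affine
part, from a space of dimension at most `24 * 4 ^ m`, and a remainder of squared norm at most
`6 n Ω / 16 ^ m`. By a discretised Riesz representation, the pairing of the noise with all these
remainders is controlled by one quadratic form `εᵀ M ε` with `0 ≤ M ≤ 1` and `tr M ≤ 8 * 4 ^ m`, and
the affine parts are controlled in the same way by orthogonal projections. For Gaussian noise such
forms have the tail `exp (tr M / 2 - u / 4)`, so a union bound over the pairs and over the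
`2K`-tuples of pairs costs only `O(K log p)`. The rate is the value of `4 ^ m / n + log (ep) / n`
for `4 ^ m ≍ n ^ (1 / 3)`, the level at which the roughness term becomes comparable to `λₙ`.
-/

namespace Census

/-! ### Quadratic forms in Gaussian noise -/

section GaussianQuadraticForms

open Matrix

/-- A positive semidefinite matrix that is at most the identity as a quadratic form and has trace
at most `D`: a smoothed version of an orthogonal projection of rank `D`. -/
structure IsTraceContraction {ι : Type*} [Fintype ι] (M : Matrix ι ι ℝ) (D : ℝ) : Prop where
  posSemidef : M.PosSemidef
  dotProduct_mulVec_le : ∀ a, a ⬝ᵥ M *ᵥ a ≤ a ⬝ᵥ a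
  trace_le : M.trace ≤ D

lemma IsTraceContraction.mono {ι : Type*} [Fintype ι] {M : Matrix ι ι ℝ} {D D' : ℝ}
    (hM : IsTraceContraction M D) (h : D ≤ D') : IsTraceContraction M D' :=
  ⟨hM.posSemidef, hM.dotProduct_mulVec_le, hM.trace_le.trans h⟩

lemma integral_exp_mul_sq_gaussianReal {θ : ℝ} (hθ : θ < 1 / 2) :
    ∫ x, Real.exp (θ * x ^ 2) ∂(gaussianReal 0 1) = √(1 / (1 - 2 * θ)) := by
  have hpdf (x : ℝ) : gaussianPDFReal 0 1 x • Real.exp (θ * x ^ 2)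
      = (√(2 * Real.pi))⁻¹ * Real.exp (-(1 / 2 - θ) * x ^ 2) := by
    simp only [gaussianPDFReal, smul_eq_mul, NNReal.coe_one, mul_one, sub_zero]
    rw [mul_assoc, ← Real.exp_add]
    congr 2
    ring
  rw [integral_gaussianReal_eq_integral_smul one_ne_zero]
  simp_rw [hpdf]
  rw [integral_const_mul, integral_gaussian, ← Real.sqrt_inv, ← Real.sqrt_mul (by positivity)]
  have : 1 / 2 - θ ≠ 0 := by linarith
  have : 1 - 2 * θ ≠ 0 := by linarith
  congr 1
  field_simp

lemma integrable_exp_mul_sq_gaussianReal {θ : ℝ} (hθ : θ < 1 / 2) :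
    Integrable (fun x ↦ Real.exp (θ * x ^ 2)) (gaussianReal 0 1) := by
  by_contra h
  have hpos : 0 < √(1 / (1 - 2 * θ)) := Real.sqrt_pos.2 (one_div_pos.2 (by linarith))
  rw [← integral_exp_mul_sq_gaussianReal hθ, integral_undef h] at hpos
  exact hpos.false

lemma integral_exp_mul_sq_gaussianReal_le {θ : ℝ} (h₀ : 0 ≤ θ) (h₁ : θ ≤ 1 / 4) :
    ∫ x, Real.exp (θ * x ^ 2) ∂(gaussianReal 0 1) ≤ Real.exp (2 * θ) := by
  have hexp : Real.exp (2 * θ) ^ 2 = Real.exp (4 * θ) := by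
    rw [← Real.exp_nat_mul]; congr 1; push_cast; ring
  rw [integral_exp_mul_sq_gaussianReal (by linarith)]
  refine Real.sqrt_le_iff.2 ⟨(Real.exp_pos _).le, ?_⟩
  rw [hexp, div_le_iff₀ (by linarith)]
  nlinarith [Real.add_one_le_exp (4 * θ)]

variable {ι : Type*} [Fintype ι]

lemma measure_pi_gaussianReal_sum_mul_sq_gt_le {l : ι → ℝ} (h₀ : ∀ i, 0 ≤ l i)
    (h₁ : ∀ i, l i ≤ 1) (u : ℝ) :
    Measure.pi (fun _ : ι ↦ gaussianReal 0 1) {x | u < ∑ i, l i * x i ^ 2} ≤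
      ENNReal.ofReal (Real.exp ((∑ i, l i) / 2 - u / 4)) := by
  set μ := Measure.pi fun _ : ι ↦ gaussianReal 0 1
  set F : (ι → ℝ) → ℝ := fun x ↦ ∏ i, Real.exp (l i / 4 * x i ^ 2) with hF
  have hF_eq (x : ι → ℝ) : F x = Real.exp ((∑ i, l i * x i ^ 2) / 4) := by
    simp only [hF]
    rw [← Real.exp_sum, Finset.sum_div]
    congr 2 with i
    ring
  have hF_int : Integrable F μ :=
    Integrable.fintype_prod (f := fun i (x : ℝ) ↦ Real.exp (l i / 4 * x ^ 2))
      fun i ↦ integrable_exp_mul_sq_gaussianReal (by linarith [h₁ i])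
  have hF_le : ∫ x, F x ∂μ ≤ Real.exp ((∑ i, l i) / 2) := calc
    ∫ x, F x ∂μ = ∏ i, ∫ x, Real.exp (l i / 4 * x ^ 2) ∂(gaussianReal 0 1) :=
      integral_fintype_prod_eq_prod (f := fun i (x : ℝ) ↦ Real.exp (l i / 4 * x ^ 2))
    _ ≤ ∏ i, Real.exp (2 * (l i / 4)) :=
      Finset.prod_le_prod (fun i _ ↦ integral_nonneg fun x ↦ (Real.exp_pos _).le) fun i _ ↦
        integral_exp_mul_sq_gaussianReal_le (by linarith [h₀ i]) (by linarith [h₁ i])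
    _ = Real.exp ((∑ i, l i) / 2) := by
      rw [← Real.exp_sum, Finset.sum_div]
      congr 2 with i
      ring
  have hmarkov := mul_meas_ge_le_integral_of_nonneg
    (.of_forall fun x ↦ Finset.prod_nonneg fun i _ ↦ (Real.exp_pos _).le)
    hF_int (Real.exp (u / 4))
  have hsub : {x : ι → ℝ | u < ∑ i, l i * x i ^ 2} ⊆ {x | Real.exp (u / 4) ≤ F x} := by
    intro x hx
    rw [Set.mem_ofPred_eq] at hx ⊢
    rw [hF_eq, Real.exp_le_exp]
    linarith
  refine (measure_mono hsub).trans ?_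
  rw [← ofReal_measureReal]
  refine ENNReal.ofReal_le_ofReal ?_
  rw [Real.exp_sub, le_div_iff₀ (Real.exp_pos _), mul_comm]
  exact hmarkov.trans hF_le

variable {M : Matrix ι ι ℝ}

lemma dotProduct_mulVec_sum_eigenvectorBasis [DecidableEq ι] (hM : M.IsHermitian) (x : ι → ℝ) :
    (∑ i, x i • hM.eigenvectorBasis i).ofLp ⬝ᵥ M *ᵥ (∑ i, x i • hM.eigenvectorBasis i).ofLp
      = ∑ i, hM.eigenvalues i * x i ^ 2 := by
  have hmul : M *ᵥ (∑ i, x i • hM.eigenvectorBasis i).ofLp =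
      (∑ i, (hM.eigenvalues i * x i) • hM.eigenvectorBasis i).ofLp := by
    simp only [WithLp.ofLp_sum, WithLp.ofLp_smul, mulVec_sum, mulVec_smul,
      hM.mulVec_eigenvectorBasis, smul_smul, mul_comm]
  have hinner := hM.eigenvectorBasis.orthonormal.inner_sum (fun i ↦ hM.eigenvalues i * x i) x
    Finset.univ
  rw [EuclideanSpace.inner_eq_star_dotProduct, star_trivial] at hinner
  rw [hmul, hinner]
  exact Finset.sum_congr rfl fun i _ ↦ by rw [conj_trivial]; ring

lemma IsTraceContraction.eigenvalues_le_one [DecidableEq ι] {D : ℝ}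
    (hM : IsTraceContraction M D) (i : ι) : hM.posSemidef.1.eigenvalues i ≤ 1 := by
  have hform := hM.dotProduct_mulVec_le (hM.posSemidef.1.eigenvectorBasis i).ofLp
  have hunit := hM.posSemidef.1.eigenvectorBasis.inner_eq_one i
  rw [EuclideanSpace.inner_eq_star_dotProduct, star_trivial] at hunit
  rwa [hM.posSemidef.1.mulVec_eigenvectorBasis, dotProduct_smul, hunit, smul_eq_mul,
    mul_one] at hform

lemma measurable_dotProduct_mulVec (M : Matrix ι ι ℝ) :
    Measurable fun a : ι → ℝ ↦ a ⬝ᵥ M *ᵥ a :=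
  Continuous.measurable (by fun_prop)

-- The standard Gaussian measure is rotation invariant, so `M` may be diagonalised.
lemma IsTraceContraction.measure_pi_gaussianReal_gt_le {D : ℝ} (hM : IsTraceContraction M D)
    (u : ℝ) :
    Measure.pi (fun _ : ι ↦ gaussianReal 0 1) {ε | u < ε ⬝ᵥ M *ᵥ ε} ≤
      ENNReal.ofReal (Real.exp (D / 2 - u / 4)) := by
  classical
  have hH := hM.posSemidef.1
  have hmeas : MeasurableSet {a : EuclideanSpace ℝ ι | u < a.ofLp ⬝ᵥ M *ᵥ a.ofLp} :=
    measurableSet_lt measurable_const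
      ((measurable_dotProduct_mulVec M).comp (PiLp.continuous_ofLp 2 _).measurable)
  have hrot : Measure.pi (fun _ : ι ↦ gaussianReal 0 1) {ε | u < ε ⬝ᵥ M *ᵥ ε} =
      Measure.pi (fun _ : ι ↦ gaussianReal 0 1) {x | u < ∑ i, hH.eigenvalues i * x i ^ 2} := by
    have h := congrArg (· {a : EuclideanSpace ℝ ι | u < a.ofLp ⬝ᵥ M *ᵥ a.ofLp})
      ((map_pi_eq_stdGaussian (ι := ι)).trans
        (stdGaussian_eq_map_pi_orthonormalBasis hH.eigenvectorBasis))
    simp only at h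
    rw [Measure.map_apply (by fun_prop) hmeas, Measure.map_apply (by fun_prop) hmeas] at h
    simpa only [Set.preimage_ofPred_eq, dotProduct_mulVec_sum_eigenvectorBasis] using h
  have htrace : ∑ i, hH.eigenvalues i ≤ D := by
    simpa [hH.trace_eq_sum_eigenvalues] using hM.trace_le
  rw [hrot]
  refine (measure_pi_gaussianReal_sum_mul_sq_gt_le hM.posSemidef.eigenvalues_nonneg
    hM.eigenvalues_le_one u).trans (ENNReal.ofReal_le_ofReal (Real.exp_le_exp.2 ?_))
  linarith

lemma gaussMeasure_eq_map_mul (n : ℕ) (σ : ℝ) :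
    gaussMeasure n σ = (Measure.pi fun _ : Fin n ↦ gaussianReal 0 1).map (σ • ·) := by
  have hcoord : gaussianReal 0 ⟨σ ^ 2, sq_nonneg σ⟩ = (gaussianReal 0 1).map (σ * ·) := by
    rw [gaussianReal_map_const_mul, mul_zero, mul_one]
    rfl
  unfold gaussMeasure
  rw [hcoord, ← Measure.pi_map_pi (fun _ ↦ by fun_prop)]
  rfl

instance isProbabilityMeasure_gaussMeasure (n : ℕ) (σ : ℝ) :
    IsProbabilityMeasure (gaussMeasure n σ) := by
  rw [gaussMeasure_eq_map_mul]
  exact Measure.isProbabilityMeasure_map (by fun_prop)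

variable {n : ℕ} {σ : ℝ}

lemma IsTraceContraction.gaussMeasure_gt_le {M : Matrix (Fin n) (Fin n) ℝ} {D : ℝ}
    (hM : IsTraceContraction M D) (hσ : 0 < σ) (u : ℝ) :
    gaussMeasure n σ {ε | σ ^ 2 * u < ε ⬝ᵥ M *ᵥ ε} ≤
      ENNReal.ofReal (Real.exp (D / 2 - u / 4)) := by
  have hscale : (σ • ·) ⁻¹' {ε : Fin n → ℝ | σ ^ 2 * u < ε ⬝ᵥ M *ᵥ ε} =
      {ε | u < ε ⬝ᵥ M *ᵥ ε} := by
    ext ε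
    simp only [Set.mem_preimage, Set.mem_ofPred_eq, mulVec_smul, smul_dotProduct,
      dotProduct_smul, smul_eq_mul, ← mul_assoc, ← sq]
    exact mul_lt_mul_iff_right₀ (by positivity)
  rw [gaussMeasure_eq_map_mul, Measure.map_apply (by fun_prop)
    (measurableSet_lt measurable_const (measurable_dotProduct_mulVec M)), hscale]
  exact hM.measure_pi_gaussianReal_gt_le u

lemma gaussMeasure_forall_dotProduct_mulVec_le {J : Type*} [Fintype J]
    {M : J → Matrix (Fin n) (Fin n) ℝ} {D : ℝ} (hM : ∀ j, IsTraceContraction (M j) D)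
    (hσ : 0 < σ) {u δ : ℝ} (hδ : Fintype.card J * Real.exp (D / 2 - u / 4) ≤ δ) :
    ENNReal.ofReal (1 - δ) ≤
      gaussMeasure n σ {ε | ∀ j, ε ⬝ᵥ M j *ᵥ ε ≤ σ ^ 2 * u} := by
  have hδ₀ : 0 ≤ δ := le_trans (by positivity) hδ
  have hmeas : MeasurableSet {ε : Fin n → ℝ | ∀ j, ε ⬝ᵥ M j *ᵥ ε ≤ σ ^ 2 * u} := by
    simp only [Set.ofPred_forall]
    exact .iInter fun j ↦ measurableSet_le (measurable_dotProduct_mulVec _) measurable_const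
  have hcompl : {ε : Fin n → ℝ | ∀ j, ε ⬝ᵥ M j *ᵥ ε ≤ σ ^ 2 * u}ᶜ =
      ⋃ j, {ε | σ ^ 2 * u < ε ⬝ᵥ M j *ᵥ ε} := by
    ext ε; simp
  have hbad : gaussMeasure n σ {ε | ∀ j, ε ⬝ᵥ M j *ᵥ ε ≤ σ ^ 2 * u}ᶜ ≤ ENNReal.ofReal δ := calc
    _ ≤ ∑ j, gaussMeasure n σ {ε | σ ^ 2 * u < ε ⬝ᵥ M j *ᵥ ε} :=
      hcompl ▸ measure_iUnion_fintype_le _ _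
    _ ≤ ∑ _j : J, ENNReal.ofReal (Real.exp (D / 2 - u / 4)) :=
      Finset.sum_le_sum fun j _ ↦ (hM j).gaussMeasure_gt_le hσ u
    _ = ENNReal.ofReal (Fintype.card J * Real.exp (D / 2 - u / 4)) := by
      rw [Finset.sum_const, nsmul_eq_mul, Finset.card_univ,
        ENNReal.ofReal_mul (Nat.cast_nonneg _), ENNReal.ofReal_natCast]
    _ ≤ ENNReal.ofReal δ := ENNReal.ofReal_le_ofReal hδ
  rw [ENNReal.ofReal_sub _ hδ₀, ENNReal.ofReal_one, tsub_le_iff_right,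
    ← prob_add_prob_compl (μ := gaussMeasure n σ) hmeas]
  gcongr

end GaussianQuadraticForms

/-! ### Trace contractions from projections and from the Riesz representation -/

section TraceContractions

open Matrix UniformSpace
open scoped InnerProductSpace

variable {ι : Type*} [Fintype ι]

section Gram

variable {H : Type*} [NormedAddCommGroup H] [InnerProductSpace ℝ H] (k : ι → H)

lemma dotProduct_gram_mulVec_self (a : ι → ℝ) :
    a ⬝ᵥ gram ℝ k *ᵥ a = ‖∑ i, a i • k i‖ ^ 2 := by
  simpa only [star_trivial, real_inner_self_eq_norm_sq] using
    star_dotProduct_gram_mulVec (𝕜 := ℝ) k a a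

lemma inner_sum_smul_sq_le_dotProduct_gram (a : ι → ℝ) (g : H) :
    ⟪∑ i, a i • k i, g⟫_ℝ ^ 2 ≤ (a ⬝ᵥ gram ℝ k *ᵥ a) * ‖g‖ ^ 2 := by
  rw [dotProduct_gram_mulVec_self, ← mul_pow]
  exact sq_le_sq' (neg_le_of_abs_le (abs_real_inner_le_norm _ _)) (real_inner_le_norm _ _)

variable {k}

lemma isTraceContraction_gram (hk : ∀ a : ι → ℝ, ‖∑ i, a i • k i‖ ^ 2 ≤ a ⬝ᵥ a) :
    IsTraceContraction (gram ℝ k) (∑ i, ‖k i‖ ^ 2) where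
  posSemidef := posSemidef_gram ℝ k
  dotProduct_mulVec_le a := (dotProduct_gram_mulVec_self k a).trans_le (hk a)
  trace_le := by simp only [trace, diag_apply, gram_apply, real_inner_self_eq_norm_sq, le_refl]

end Gram

lemma sum_norm_sq_starProjection [DecidableEq ι] (V : Submodule ℝ (EuclideanSpace ℝ ι)) :
    ∑ i, ‖V.starProjection (EuclideanSpace.single i 1)‖ ^ 2 = Module.finrank ℝ V := by
  have hproj : LinearMap.IsProj V V.starProjection.toLinearMap :=
    ⟨V.starProjection_apply_mem, fun _ ↦ Submodule.starProjection_eq_self_iff.2⟩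
  rw [← hproj.trace, LinearMap.trace_eq_sum_inner _ (EuclideanSpace.basisFun ι ℝ)]
  refine Finset.sum_congr rfl fun i _ ↦ ?_
  rw [EuclideanSpace.basisFun_apply, ContinuousLinearMap.coe_coe, ← real_inner_self_eq_norm_sq,
    V.inner_starProjection_left_eq_right,
    Submodule.starProjection_eq_self_iff.2 (V.starProjection_apply_mem _)]

/-- The matrix is the orthogonal projection onto `V`, realised as the Gram matrix of the projected
standard basis. -/
lemma exists_isTraceContraction_finrank (V : Submodule ℝ (ι → ℝ)) :
    ∃ P : Matrix ι ι ℝ, IsTraceContraction P (Module.finrank ℝ V) ∧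
      ∀ a, ∀ v ∈ V, (a ⬝ᵥ v) ^ 2 ≤ (a ⬝ᵥ P *ᵥ a) * (v ⬝ᵥ v) := by
  classical
  let φ := (WithLp.linearEquiv 2 ℝ (ι → ℝ)).symm
  let V' : Submodule ℝ (EuclideanSpace ℝ ι) := V.map φ.toLinearMap
  let k : ι → EuclideanSpace ℝ ι := fun i ↦ V'.starProjection (EuclideanSpace.single i 1)
  have hsum (a : ι → ℝ) : ∑ i, a i • k i = V'.starProjection (φ a) := by
    rw [← (EuclideanSpace.basisFun ι ℝ).sum_repr (φ a), map_sum]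
    simp [k, φ]
  have hnorm (a : ι → ℝ) : ‖φ a‖ ^ 2 = a ⬝ᵥ a := by
    rw [EuclideanSpace.norm_sq_eq (φ a)]
    simp [φ, dotProduct, sq]
  have hcontraction (a : ι → ℝ) : ‖∑ i, a i • k i‖ ^ 2 ≤ a ⬝ᵥ a := by
    rw [hsum, ← hnorm]
    gcongr
    exact V'.norm_starProjection_apply_le _
  have hfinrank : Module.finrank ℝ V' = Module.finrank ℝ V := LinearEquiv.finrank_map_eq φ V
  refine ⟨gram ℝ k, ?_, fun a v hv ↦ ?_⟩
  · rw [← hfinrank, ← sum_norm_sq_starProjection V']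
    exact isTraceContraction_gram hcontraction
  · have hv' : V'.starProjection (φ v) = φ v :=
      Submodule.starProjection_eq_self_iff.2 (Submodule.mem_map_of_mem hv)
    have hdot : a ⬝ᵥ v = ⟪∑ i, a i • k i, φ v⟫_ℝ := by
      rw [hsum, V'.inner_starProjection_left_eq_right, hv']
      simp [φ, PiLp.inner_apply, dotProduct, mul_comm]
    rw [hdot, ← hnorm v]
    exact inner_sum_smul_sq_le_dotProduct_gram k a (φ v)

section Riesz

variable {W : Type*} [SeminormedAddCommGroup W] [InnerProductSpace ℝ W]

lemma exists_completion_inner_eq (l : W →ₗ[ℝ] ℝ) {c : ℝ} (hl : ∀ g, |l g| ≤ c * ‖g‖) :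
    ∃ k : Completion W, ∀ g : W, ⟪k, (g : Completion W)⟫_ℝ = l g := by
  refine ⟨(InnerProductSpace.toDual ℝ (Completion W)).symm
    ((l.mkContinuous c hl).extend (Completion.toComplL (𝕜 := ℝ))), fun g ↦ ?_⟩
  rw [InnerProductSpace.toDual_symm_apply]
  exact (l.mkContinuous c hl).extend_eq (e := Completion.toComplL (𝕜 := ℝ))
    Completion.denseRange_coe (Completion.isUniformInducing_coe W) g

lemma completion_norm_sq_le_of_inner_sq_le {w : Completion W} {c : ℝ} (hc : 0 ≤ c)
    (hw : ∀ g : W, ⟪w, (g : Completion W)⟫_ℝ ^ 2 ≤ c * ‖g‖ ^ 2) : ‖w‖ ^ 2 ≤ c := by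
  have hself : ⟪w, w⟫_ℝ ^ 2 ≤ c * ‖w‖ ^ 2 := by
    suffices ∀ x : Completion W, ⟪w, x⟫_ℝ ^ 2 ≤ c * ‖x‖ ^ 2 from this w
    intro x
    induction x using Completion.induction_on with
    | hp => exact isClosed_le (by fun_prop) (by fun_prop)
    | ih g => simpa only [Completion.norm_coe] using hw g
  rw [real_inner_self_eq_norm_sq, sq (‖w‖ ^ 2)] at hself
  rcases (sq_nonneg ‖w‖).eq_or_lt' with h | h
  · exact h ▸ hc
  · exact le_of_mul_le_mul_right hself h

variable {L : W →ₗ[ℝ] ι → ℝ} {b : ι → ℝ}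

lemma exists_isTraceContraction_of_sq_le_norm_sq (hb₀ : ∀ i, 0 ≤ b i)
    (hb : ∀ g i, L g i ^ 2 ≤ b i * ‖g‖ ^ 2) (hL : ∀ g, L g ⬝ᵥ L g ≤ ‖g‖ ^ 2) :
    ∃ M : Matrix ι ι ℝ, IsTraceContraction M (∑ i, b i) ∧
      ∀ a g, (a ⬝ᵥ L g) ^ 2 ≤ (a ⬝ᵥ M *ᵥ a) * ‖g‖ ^ 2 := by
  have habs (i : ι) (g : W) : |(LinearMap.proj i ∘ₗ L) g| ≤ √(b i) * ‖g‖ := by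
    refine abs_le_of_sq_le_sq ?_ (by positivity)
    rw [mul_pow, Real.sq_sqrt (hb₀ i)]
    exact hb g i
  choose k hk using fun i ↦ exists_completion_inner_eq (LinearMap.proj i ∘ₗ L) (habs i)
  replace hk (i : ι) (g : W) : ⟪k i, (g : Completion W)⟫_ℝ = L g i := hk i g
  have hinner (a : ι → ℝ) (g : W) :
      ⟪∑ i, a i • k i, (g : Completion W)⟫_ℝ = a ⬝ᵥ L g := by
    simp only [sum_inner, real_inner_smul_left, hk, dotProduct]
  have hcontraction (a : ι → ℝ) : ‖∑ i, a i • k i‖ ^ 2 ≤ a ⬝ᵥ a := by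
    refine completion_norm_sq_le_of_inner_sq_le (dotProduct_self_star_nonneg a) fun g ↦ ?_
    rw [hinner]
    refine LE.le.trans ?_ (mul_le_mul_of_nonneg_left (hL g) (dotProduct_self_star_nonneg a))
    simpa only [dotProduct, ← sq] using Finset.sum_mul_sq_le_sq_mul_sq Finset.univ a (L g)
  refine ⟨gram ℝ k, (isTraceContraction_gram hcontraction).mono ?_, fun a g ↦ ?_⟩
  · exact Finset.sum_le_sum fun i _ ↦
      completion_norm_sq_le_of_inner_sq_le (hb₀ i) fun g ↦ by rw [hk]; exact hb g i
  · rw [← hinner, ← Completion.norm_coe]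
    exact inner_sum_smul_sq_le_dotProduct_gram k a _

end Riesz

/-- Discretised Riesz representation: `M` is the Gram matrix of the representers of the coordinates
of `L` in the Hilbert space completion of `W`. -/
lemma exists_isTraceContraction_of_isPosSemidef {W : Type*} [AddCommGroup W] [Module ℝ W]
    {B : LinearMap.BilinForm ℝ W} (hB : B.IsPosSemidef) {L : W →ₗ[ℝ] ι → ℝ} {b : ι → ℝ}
    (hb₀ : ∀ i, 0 ≤ b i) (hb : ∀ g i, L g i ^ 2 ≤ b i * B g g)
    (hL : ∀ g, L g ⬝ᵥ L g ≤ B g g) :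
    ∃ M : Matrix ι ι ℝ, IsTraceContraction M (∑ i, b i) ∧
      ∀ a g, (a ⬝ᵥ L g) ^ 2 ≤ (a ⬝ᵥ M *ᵥ a) * B g g := by
  let core : PreInnerProductSpace.Core ℝ W :=
    { inner := fun g h ↦ B g h
      conj_inner_symm := fun g h ↦ hB.isSymm.eq h g
      re_inner_nonneg := hB.isNonneg.nonneg
      add_left := fun g h k ↦ by rw [map_add, LinearMap.add_apply]
      smul_left := fun g h r ↦ by rw [map_smul, LinearMap.smul_apply, smul_eq_mul]; rfl }
  let : SeminormedAddCommGroup W :=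
    InnerProductSpace.Core.toSeminormedAddCommGroup (c := core)
  let : InnerProductSpace ℝ W := InnerProductSpace.ofCore core
  have hnorm (g : W) : B g g = ‖g‖ ^ 2 := real_inner_self_eq_norm_sq g
  simp only [hnorm] at hb hL ⊢
  exact exists_isTraceContraction_of_sq_le_norm_sq hb₀ hb hL

end TraceContractions

/-! ### Roughness and averaged Taylor polynomials -/

section Hessian

variable {E : Type*} [NormedAddCommGroup E] [NormedSpace ℝ E] {g k : E → ℝ}

/-- The second Fréchet derivative of `g` at `z`, as a bilinear map. -/
def hessian (g : E → ℝ) (z : E) : E →L[ℝ] E →L[ℝ] ℝ := fderiv ℝ (fderiv ℝ g) z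

lemma hasFDerivAt_fderiv (hg : ContDiff ℝ 2 g) (z : E) :
    HasFDerivAt (fderiv ℝ g) (hessian g z) z :=
  ((hg.fderiv_right (m := 1) (by norm_num)).differentiable (by norm_num) z).hasFDerivAt

lemma continuous_hessian (hg : ContDiff ℝ 2 g) : Continuous (hessian g) :=
  (hg.fderiv_right (m := 1) (by norm_num)).continuous_fderiv (by norm_num)

lemma hessian_comm (hg : ContDiff ℝ 2 g) (z v w : E) : hessian g z v w = hessian g z w v :=
  hg.contDiffAt.isSymmSndFDerivAt (by simp) v w

lemma fderiv_add_of_contDiff_two (hg : ContDiff ℝ 2 g) (hk : ContDiff ℝ 2 k) :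
    fderiv ℝ (g + k) = fderiv ℝ g + fderiv ℝ k :=
  funext fun z ↦ fderiv_add (hg.differentiable two_ne_zero z) (hk.differentiable two_ne_zero z)

lemma fderiv_smul_of_contDiff_two (r : ℝ) (hg : ContDiff ℝ 2 g) :
    fderiv ℝ (r • g) = r • fderiv ℝ g :=
  funext fun z ↦ fderiv_const_smul (hg.differentiable two_ne_zero z) r

lemma hessian_add (hg : ContDiff ℝ 2 g) (hk : ContDiff ℝ 2 k) :
    hessian (g + k) = hessian g + hessian k := by
  funext z
  rw [hessian, fderiv_add_of_contDiff_two hg hk]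
  exact ((hasFDerivAt_fderiv hg z).add (hasFDerivAt_fderiv hk z)).fderiv

lemma hessian_smul (r : ℝ) (hg : ContDiff ℝ 2 g) : hessian (r • g) = r • hessian g := by
  funext z
  rw [hessian, fderiv_smul_of_contDiff_two r hg]
  exact ((hasFDerivAt_fderiv hg z).const_smul r).fderiv

lemma hasDerivAt_fderiv_comp_apply (hg : ContDiff ℝ 2 g) {l : ℝ → E} {d : E} {t : ℝ}
    (hl : HasDerivAt l d t) (e : E) :
    HasDerivAt (fun t ↦ fderiv ℝ g (l t) e) (hessian g (l t) d e) t := by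
  simpa using ((hasFDerivAt_fderiv hg (l t)).comp_hasDerivAt t hl).clm_apply
    (hasDerivAt_const t e)

lemma sub_taylor_eq_integral (hg : ContDiff ℝ 2 g) (x y : E) :
    g x - (g y + fderiv ℝ g y (x - y)) =
      ∫ t in (0 : ℝ)..1, t * hessian g (x + t • (y - x)) (y - x) (y - x) := by
  have hline (t : ℝ) : HasDerivAt (fun t : ℝ ↦ x + t • (y - x)) (y - x) t := by
    simpa using ((hasDerivAt_id t).smul_const (y - x)).const_add x
  have hprim (t : ℝ) : HasDerivAt
      (fun t ↦ t * fderiv ℝ g (x + t • (y - x)) (y - x) - g (x + t • (y - x)))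
      (t * hessian g (x + t • (y - x)) (y - x) (y - x)) t := by
    have hg' := (hg.differentiable two_ne_zero (x + t • (y - x))).hasFDerivAt
    refine (((hasDerivAt_id t).fun_mul (hasDerivAt_fderiv_comp_apply hg (hline t) (y - x))).fun_sub
      (hg'.comp_hasDerivAt t (hline t))).congr_deriv ?_
    simp only [id_eq, one_mul, add_sub_cancel_left]
  have hcont := continuous_hessian hg
  rw [intervalIntegral.integral_eq_sub_of_hasDerivAt (fun t _ ↦ hprim t)
    (Continuous.intervalIntegrable (by fun_prop) _ _), ← neg_sub y x, map_neg]
  simp only [one_smul, one_mul, zero_smul, zero_mul, add_zero, add_sub_cancel]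
  ring

end Hessian

section Averaging

variable {E : Type*} [NormedAddCommGroup E] [NormedSpace ℝ E] [FiniteDimensional ℝ E]
  [MeasurableSpace E] [BorelSpace E] {μ : Measure E} [μ.IsAddHaarMeasure]

lemma pow_finrank_mul_setIntegral_segment_le {D : E → ℝ} (hD : Continuous D)
    (hD₀ : ∀ z, 0 ≤ D z) {Q : Set E} (hQ : IsCompact Q) (hconv : Convex ℝ Q) {x : E}
    (hx : x ∈ Q) {t : ℝ} (ht : t ∈ Set.Ioc (0 : ℝ) 1) :
    t ^ Module.finrank ℝ E * ∫ y in Q, D (x + t • (y - x)) ∂μ ≤ ∫ y in Q, D y ∂μ := by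
  set G := Q.indicator D
  have hGint : Integrable G μ :=
    (integrable_indicator_iff hQ.measurableSet).2 (hD.continuousOn.integrableOn_compact hQ)
  have hG₀ (z : E) : 0 ≤ G z := Set.indicator_nonneg (fun z _ ↦ hD₀ z) z
  have hle : ∫ y in Q, D (x + t • (y - x)) ∂μ ≤ ∫ y, G ((1 - t) • x + t • y) ∂μ := by
    rw [← integral_indicator hQ.measurableSet]
    refine integral_mono_of_nonneg (ae_of_all _ (Set.indicator_nonneg fun z _ ↦ hD₀ _))
      ((hGint.comp_add_left ((1 - t) • x)).comp_smul ht.1.ne') (ae_of_all _ fun y ↦ ?_)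
    refine Set.indicator_apply_le' (fun hy ↦ ?_) fun _ ↦ hG₀ _
    have hmem : (1 - t) • x + t • y ∈ Q := hconv hx hy (by linarith [ht.2]) ht.1.le (by ring)
    calc D (x + t • (y - x)) = D ((1 - t) • x + t • y) := by congr 1; module
      _ ≤ G ((1 - t) • x + t • y) := (Set.indicator_of_mem hmem D).ge
  have hscale : ∫ y, G ((1 - t) • x + t • y) ∂μ =
      (t ^ Module.finrank ℝ E)⁻¹ * ∫ y in Q, D y ∂μ := by
    rw [Measure.integral_comp_smul μ (fun w ↦ G ((1 - t) • x + w)) t, integral_add_left_eq_self,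
      integral_indicator hQ.measurableSet, smul_eq_mul, abs_of_pos (inv_pos.2 (pow_pos ht.1 _))]
  rw [hscale, inv_mul_eq_div, le_div_iff₀ (pow_pos ht.1 _)] at hle
  rwa [mul_comm]

lemma setIntegral_integral_segment_le {D : E → ℝ} (hD : Continuous D) (hD₀ : ∀ z, 0 ≤ D z)
    {Q : Set E} (hQ : IsCompact Q) (hconv : Convex ℝ Q) {x : E} (hx : x ∈ Q) :
    ∫ y in Q, (∫ t in (0 : ℝ)..1, t ^ Module.finrank ℝ E * D (x + t • (y - x))) ∂μ ≤
      ∫ y in Q, D y ∂μ := by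
  have hint : Integrable
      (Function.uncurry fun y (t : ℝ) ↦ t ^ Module.finrank ℝ E * D (x + t • (y - x)))
      ((μ.restrict Q).prod (volume.restrict (Set.Ioc 0 1))) := by
    rw [Measure.prod_restrict]
    exact ((Continuous.continuousOn (by fun_prop)).integrableOn_compact
      (hQ.prod isCompact_Icc)).mono_set (Set.prod_mono_right Set.Ioc_subset_Icc_self)
  simp only [intervalIntegral.integral_of_le zero_le_one]
  rw [integral_integral_swap hint]
  calc ∫ t in Set.Ioc (0 : ℝ) 1, ∫ y in Q, t ^ Module.finrank ℝ E * D (x + t • (y - x)) ∂μ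
      ≤ ∫ _ in Set.Ioc (0 : ℝ) 1, ∫ y in Q, D y ∂μ := by
        refine setIntegral_mono_on hint.integral_prod_right (integrable_const _)
          measurableSet_Ioc fun t ht ↦ ?_
        rw [integral_const_mul]
        exact pow_finrank_mul_setIntegral_segment_le hD hD₀ hQ hconv hx ht
    _ = ∫ y in Q, D y ∂μ := by simp

end Averaging

section Plane

variable {g k : ℝ × ℝ → ℝ}

/-- The Euclidean pairing of the triples `(∂₁∂₁, ∂₁∂₂, ∂₂∂₂)` of second partial derivatives. Its
diagonal is the integrand of the roughness penalty, in which the mixed derivative counts once. -/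
def hessianInner (g k : ℝ × ℝ → ℝ) (z : ℝ × ℝ) : ℝ :=
  hessian g z (1, 0) (1, 0) * hessian k z (1, 0) (1, 0)
    + hessian g z (1, 0) (0, 1) * hessian k z (1, 0) (0, 1)
    + hessian g z (0, 1) (0, 1) * hessian k z (0, 1) (0, 1)

lemma continuous_hessianInner (hg : ContDiff ℝ 2 g) (hk : ContDiff ℝ 2 k) :
    Continuous (hessianInner g k) := by
  have := continuous_hessian hg
  have := continuous_hessian hk
  unfold hessianInner
  fun_prop

lemma hessianInner_comm (g k : ℝ × ℝ → ℝ) (z : ℝ × ℝ) :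
    hessianInner g k z = hessianInner k g z := by
  simp only [hessianInner, mul_comm]

lemma hessianInner_self_nonneg (g : ℝ × ℝ → ℝ) (z : ℝ × ℝ) : 0 ≤ hessianInner g g z :=
  add_nonneg (add_nonneg (mul_self_nonneg _) (mul_self_nonneg _)) (mul_self_nonneg _)

lemma hessian_apply_self (hg : ContDiff ℝ 2 g) (z d : ℝ × ℝ) :
    hessian g z d d = d.1 ^ 2 * hessian g z (1, 0) (1, 0)
      + 2 * (d.1 * d.2) * hessian g z (1, 0) (0, 1) + d.2 ^ 2 * hessian g z (0, 1) (0, 1) := by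
  have hd : d = d.1 • ((1, 0) : ℝ × ℝ) + d.2 • ((0, 1) : ℝ × ℝ) := by ext <;> simp
  conv_lhs => rw [hd]
  simp only [map_add, map_smul, _root_.add_apply, _root_.smul_apply, smul_eq_mul,
    hessian_comm hg z (0, 1) (1, 0)]
  ring

lemma hessian_apply_self_sq_le (hg : ContDiff ℝ 2 g) (z d : ℝ × ℝ) :
    hessian g z d d ^ 2 ≤ 6 * ‖d‖ ^ 4 * hessianInner g g z := by
  have hd₁ : d.1 ^ 2 ≤ ‖d‖ ^ 2 := sq_le_sq.2 ((norm_fst_le d).trans (le_abs_self _))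
  have hd₂ : d.2 ^ 2 ≤ ‖d‖ ^ 2 := sq_le_sq.2 ((norm_snd_le d).trans (le_abs_self _))
  have hweights : (d.1 ^ 2) ^ 2 + (2 * (d.1 * d.2)) ^ 2 + (d.2 ^ 2) ^ 2 ≤ 6 * ‖d‖ ^ 4 := by
    nlinarith [mul_le_mul hd₁ hd₂ (sq_nonneg _) (sq_nonneg _),
      mul_le_mul hd₁ hd₁ (sq_nonneg _) (sq_nonneg _),
      mul_le_mul hd₂ hd₂ (sq_nonneg _) (sq_nonneg _)]
  refine le_trans ?_ (mul_le_mul_of_nonneg_right hweights (hessianInner_self_nonneg g z))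
  rw [hessian_apply_self hg, hessianInner]
  generalize hessian g z (1, 0) (1, 0) = A, hessian g z (1, 0) (0, 1) = B,
    hessian g z (0, 1) (0, 1) = C
  -- Lagrange's identity: the right side minus the left side is a sum of three squares.
  nlinarith [sq_nonneg (d.1 ^ 2 * B - 2 * (d.1 * d.2) * A), sq_nonneg (d.1 ^ 2 * C - d.2 ^ 2 * A),
    sq_nonneg (2 * (d.1 * d.2) * C - d.2 ^ 2 * B)]

lemma sub_taylor_sq_le (hg : ContDiff ℝ 2 g) (x y : ℝ × ℝ) :
    (g x - (g y + fderiv ℝ g y (x - y))) ^ 2 ≤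
      6 * ‖y - x‖ ^ 4 * ∫ t in (0 : ℝ)..1, t ^ 2 * hessianInner g g (x + t • (y - x)) := by
  have hhess := continuous_hessian hg
  have hinner := continuous_hessianInner hg hg
  have : IsProbabilityMeasure (volume.restrict (Set.Ioc (0 : ℝ) 1)) := ⟨by simp⟩
  rw [sub_taylor_eq_integral hg, ← intervalIntegral.integral_const_mul]
  simp only [intervalIntegral.integral_of_le zero_le_one]
  calc (∫ t in Set.Ioc (0 : ℝ) 1, t * hessian g (x + t • (y - x)) (y - x) (y - x)) ^ 2
      ≤ ∫ t in Set.Ioc (0 : ℝ) 1, (t * hessian g (x + t • (y - x)) (y - x) (y - x)) ^ 2 :=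
        even_two.convexOn_pow.map_integral_le (continuous_pow 2).continuousOn isClosed_univ
          (ae_of_all _ fun _ ↦ Set.mem_univ _) (Continuous.integrableOn_Ioc (by fun_prop))
          (Continuous.integrableOn_Ioc (by fun_prop))
    _ ≤ ∫ t in Set.Ioc (0 : ℝ) 1,
          6 * ‖y - x‖ ^ 4 * (t ^ 2 * hessianInner g g (x + t • (y - x))) := by
        refine integral_mono (Continuous.integrableOn_Ioc (by fun_prop))
          (Continuous.integrableOn_Ioc (by fun_prop)) fun t ↦ ?_
        have := hessian_apply_self_sq_le hg (x + t • (y - x)) (y - x)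
        simp only [mul_pow]
        nlinarith [mul_le_mul_of_nonneg_left this (sq_nonneg t)]

/-- The average over `y ∈ Q` of the first-order Taylor polynomials of `g` at `y`: an affine
function of `x` which depends linearly on `g`. -/
def averagedTaylor (Q : Set (ℝ × ℝ)) (g : ℝ × ℝ → ℝ) (x : ℝ × ℝ) : ℝ :=
  ⨍ y in Q, (g y + fderiv ℝ g y (x - y))

lemma continuous_taylor (hg : ContDiff ℝ 2 g) (x : ℝ × ℝ) :
    Continuous fun y ↦ g y + fderiv ℝ g y (x - y) := by
  have := hg.continuous_fderiv two_ne_zero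
  have := hg.continuous
  fun_prop

lemma setIntegral_sub_taylor_sq_le (hg : ContDiff ℝ 2 g) {Q : Set (ℝ × ℝ)} (hQ : IsCompact Q)
    (hconv : Convex ℝ Q) {x : ℝ × ℝ} (hx : x ∈ Q) {h : ℝ} (hdiam : ∀ y ∈ Q, ‖y - x‖ ≤ h) :
    ∫ y in Q, (g x - (g y + fderiv ℝ g y (x - y))) ^ 2 ≤
      6 * h ^ 4 * ∫ y in Q, hessianInner g g y := by
  have htaylor := continuous_taylor hg x
  have hinner := continuous_hessianInner hg hg
  let F (y : ℝ × ℝ) : ℝ := ∫ t in (0 : ℝ)..1, t ^ 2 * hessianInner g g (x + t • (y - x))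
  have hF₀ (y : ℝ × ℝ) : 0 ≤ F y := intervalIntegral.integral_nonneg zero_le_one fun t _ ↦
    mul_nonneg (sq_nonneg t) (hessianInner_self_nonneg g _)
  have hF : Continuous F :=
    intervalIntegral.continuous_parametric_intervalIntegral_of_continuous' (by fun_prop) 0 1
  calc ∫ y in Q, (g x - (g y + fderiv ℝ g y (x - y))) ^ 2
      ≤ ∫ y in Q, 6 * h ^ 4 * F y := by
        refine setIntegral_mono_on ((Continuous.continuousOn (by fun_prop)).integrableOn_compact hQ)
          ((Continuous.continuousOn (by fun_prop)).integrableOn_compact hQ) hQ.measurableSet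
          fun y hy ↦ (sub_taylor_sq_le hg x y).trans ?_
        have := pow_le_pow_left₀ (norm_nonneg _) (hdiam y hy) 4
        exact mul_le_mul_of_nonneg_right (by linarith) (hF₀ y)
    _ = 6 * h ^ 4 * ∫ y in Q, F y := integral_const_mul _ _
    _ ≤ 6 * h ^ 4 * ∫ y in Q, hessianInner g g y := by
        refine mul_le_mul_of_nonneg_left ?_ (by positivity)
        have := setIntegral_integral_segment_le (μ := volume) hinner (hessianInner_self_nonneg g)
          hQ hconv hx
        rwa [Module.finrank_prod, Module.finrank_self] at this

lemma sub_averagedTaylor_sq_le (hg : ContDiff ℝ 2 g) {Q : Set (ℝ × ℝ)} (hQ : IsCompact Q)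
    (hconv : Convex ℝ Q) (hvol : volume Q ≠ 0) {x : ℝ × ℝ} (hx : x ∈ Q) {h : ℝ}
    (hdiam : ∀ y ∈ Q, ‖y - x‖ ≤ h) :
    (g x - averagedTaylor Q g x) ^ 2 ≤
      6 * h ^ 4 * ((volume.real Q)⁻¹ * ∫ y in Q, hessianInner g g y) := by
  have htaylor := continuous_taylor hg x
  have hfin : volume Q ≠ ⊤ := hQ.measure_lt_top.ne
  have hint {f : ℝ × ℝ → ℝ} (hf : Continuous f) : IntegrableOn f Q :=
    hf.continuousOn.integrableOn_compact hQ
  have haverage : g x - averagedTaylor Q g x = ⨍ y in Q, (g x - (g y + fderiv ℝ g y (x - y))) := by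
    calc g x - averagedTaylor Q g x = (⨍ _ in Q, g x) - averagedTaylor Q g x := by
          rw [setAverage_const hvol hfin]
      _ = _ := (integral_sub (hint continuous_const).to_average (hint htaylor).to_average).symm
  calc (g x - averagedTaylor Q g x) ^ 2
      ≤ ⨍ y in Q, (g x - (g y + fderiv ℝ g y (x - y))) ^ 2 := by
        rw [haverage]
        exact even_two.convexOn_pow.map_set_average_le (continuous_pow 2).continuousOn
          isClosed_univ hvol hfin (ae_of_all _ fun _ ↦ Set.mem_univ _) (hint (by fun_prop))
          (hint (by fun_prop))
    _ ≤ (volume.real Q)⁻¹ * (6 * h ^ 4 * ∫ y in Q, hessianInner g g y) := by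
        rw [setAverage_eq, smul_eq_mul]
        gcongr
        exact setIntegral_sub_taylor_sq_le hg hQ hconv hx hdiam
    _ = _ := by ring

end Plane

section Roughness

/-- The linear space of twice continuously differentiable functions of two variables. -/
def C₂ : Submodule ℝ (ℝ × ℝ → ℝ) where
  carrier := {g | ContDiff ℝ 2 g}
  add_mem' hf hg := by
    rw [Set.mem_ofPred_eq] at *
    exact hf.add hg
  zero_mem' := by
    rw [Set.mem_ofPred_eq]
    exact contDiff_const
  smul_mem' c g hg := by
    rw [Set.mem_ofPred_eq] at *
    exact hg.const_smul c

lemma mem_C₂ {g : ℝ × ℝ → ℝ} : g ∈ C₂ ↔ ContDiff ℝ 2 g :=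
  iff_of_eq Set.mem_ofPred_eq

lemma contDiff_C₂ (g : C₂) : ContDiff ℝ 2 g.1 := mem_C₂.1 g.2

/-- The unit square `[0, 1]²`. -/
def unitSquare : Set (ℝ × ℝ) := Set.Icc 0 1 ×ˢ Set.Icc 0 1

lemma integrableOn_hessianInner (g k : C₂) {s : Set (ℝ × ℝ)} (hs : s ⊆ unitSquare) :
    IntegrableOn (hessianInner g k) s :=
  ((continuous_hessianInner (contDiff_C₂ g) (contDiff_C₂ k)).continuousOn.integrableOn_compact
    (isCompact_Icc.prod isCompact_Icc)).mono_set hs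

lemma hessianInner_add_left (g k l : C₂) (z : ℝ × ℝ) :
    hessianInner (g + k : C₂) l z = hessianInner g l z + hessianInner k l z := by
  simp only [hessianInner, Submodule.coe_add, hessian_add (contDiff_C₂ g) (contDiff_C₂ k),
    Pi.add_apply, _root_.add_apply]
  ring

lemma hessianInner_smul_left (r : ℝ) (g l : C₂) (z : ℝ × ℝ) :
    hessianInner (r • g : C₂) l z = r * hessianInner g l z := by
  simp only [hessianInner, Submodule.coe_smul, hessian_smul r (contDiff_C₂ g), Pi.smul_apply,
    _root_.smul_apply, smul_eq_mul]
  ring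

/-- The bilinear form on `C₂` whose quadratic form is the roughness penalty on the unit square. -/
def roughnessForm : LinearMap.BilinForm ℝ C₂ :=
  LinearMap.mk₂ ℝ (fun g k ↦ ∫ q in unitSquare, hessianInner g k q)
    (fun g k l ↦ by
      simp only [hessianInner_add_left]
      exact integral_add (integrableOn_hessianInner g l subset_rfl)
        (integrableOn_hessianInner k l subset_rfl))
    (fun r g l ↦ by simp only [hessianInner_smul_left, integral_const_mul, smul_eq_mul])
    (fun l g k ↦ by
      simp only [hessianInner_comm l, hessianInner_add_left]
      exact integral_add (integrableOn_hessianInner g l subset_rfl)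
        (integrableOn_hessianInner k l subset_rfl))
    (fun r l g ↦ by
      simp only [hessianInner_comm l, hessianInner_smul_left, integral_const_mul, smul_eq_mul])

lemma roughnessForm_apply (g k : C₂) :
    roughnessForm g k = ∫ q in unitSquare, hessianInner g k q := rfl

lemma isPosSemidef_roughnessForm : roughnessForm.IsPosSemidef where
  isSymm := ⟨fun g k ↦ by simp only [roughnessForm_apply, hessianInner_comm]⟩
  isNonneg := ⟨fun g ↦ integral_nonneg (hessianInner_self_nonneg g)⟩

lemma roughnessForm_self_nonneg (g : C₂) : 0 ≤ roughnessForm g g :=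
  isPosSemidef_roughnessForm.isNonneg.nonneg g

lemma roughnessForm_sub_self_le (g k : C₂) :
    roughnessForm (g - k) (g - k) ≤ 2 * roughnessForm g g + 2 * roughnessForm k k := by
  have := roughnessForm_self_nonneg (g + k)
  simp only [map_add, map_sub, LinearMap.add_apply, LinearMap.sub_apply] at this ⊢
  linarith

lemma iteratedDeriv_two_comp_line {g : ℝ × ℝ → ℝ} (hg : ContDiff ℝ 2 g) {l : ℝ → ℝ × ℝ}
    {d : ℝ × ℝ} (hl : ∀ t, HasDerivAt l d t) (t : ℝ) :
    iteratedDeriv 2 (fun t ↦ g (l t)) t = hessian g (l t) d d := by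
  have hderiv : deriv (fun t ↦ g (l t)) = fun t ↦ fderiv ℝ g (l t) d := funext fun t ↦
    ((hg.differentiable two_ne_zero _).hasFDerivAt.comp_hasDerivAt t (hl t)).deriv
  rw [iteratedDeriv_succ, iteratedDeriv_one, hderiv]
  exact (hasDerivAt_fderiv_comp_apply hg (hl t) d).deriv

lemma hasDerivAt_mk_left (v t : ℝ) : HasDerivAt (fun t : ℝ ↦ (t, v)) (1, 0) t :=
  (hasDerivAt_id t).prodMk (hasDerivAt_const t v)

lemma hasDerivAt_mk_right (u t : ℝ) : HasDerivAt (fun t : ℝ ↦ (u, t)) (0, 1) t :=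
  (hasDerivAt_const t u).prodMk (hasDerivAt_id t)

lemma deriv_deriv_eq_hessian {g : ℝ × ℝ → ℝ} (hg : ContDiff ℝ 2 g) (q : ℝ × ℝ) :
    deriv (fun t ↦ deriv (fun s ↦ g (t, s)) q.2) q.1 = hessian g q (1, 0) (0, 1) := by
  have hderiv : (fun t ↦ deriv (fun s ↦ g (t, s)) q.2) = fun t ↦ fderiv ℝ g (t, q.2) (0, 1) :=
    funext fun t ↦ ((hg.differentiable two_ne_zero _).hasFDerivAt.comp_hasDerivAt q.2
      (hasDerivAt_mk_right t q.2)).deriv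
  rw [hderiv]
  exact (hasDerivAt_fderiv_comp_apply hg (hasDerivAt_mk_left q.2 q.1) (0, 1)).deriv

lemma hessianInner_self_eq {g : ℝ × ℝ → ℝ} (hg : ContDiff ℝ 2 g) (q : ℝ × ℝ) :
    hessianInner g g q = iteratedDeriv 2 (fun t ↦ g (t, q.2)) q.1 ^ 2
      + deriv (fun t ↦ deriv (fun s ↦ g (t, s)) q.2) q.1 ^ 2
      + iteratedDeriv 2 (fun s ↦ g (q.1, s)) q.2 ^ 2 := by
  rw [iteratedDeriv_two_comp_line hg (hasDerivAt_mk_left q.2), deriv_deriv_eq_hessian hg,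
    iteratedDeriv_two_comp_line hg (hasDerivAt_mk_right q.1), hessianInner]
  ring

lemma Omega2_eq_roughnessForm {G : ℝ → ℝ → ℝ} (g : C₂) (hG : ∀ u v, G u v = g.1 (u, v)) :
    Omega2 G = roughnessForm g g := by
  obtain rfl : G = fun u v ↦ g.1 (u, v) := funext₂ hG
  rw [roughnessForm_apply]
  simp only [hessianInner_self_eq (contDiff_C₂ g)]
  rfl

lemma Omega1_eq_roughnessForm {f : ℝ → ℝ} (g : C₂) (hf : ∀ u v, g.1 (u, v) = f u) :
    Omega1 f = roughnessForm g g := by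
  have hinner (q : ℝ × ℝ) : hessianInner g g q = iteratedDeriv 2 f q.1 ^ 2 * 1 := by
    have hconst : iteratedDeriv 2 (fun _ : ℝ ↦ f q.1) q.2 = 0 := by simp [iteratedDeriv_succ]
    simp only [hessianInner_self_eq (contDiff_C₂ g), hf, deriv_const, hconst]
    ring
  rw [roughnessForm_apply]
  simp only [hinner]
  rw [unitSquare, Measure.volume_eq_prod, setIntegral_prod_mul (fun u ↦ iteratedDeriv 2 f u ^ 2)
    (fun _ ↦ (1 : ℝ)), Omega1, intervalIntegral.integral_of_le zero_le_one,
    integral_Icc_eq_integral_Ioc]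
  simp

end Roughness

section AveragedTaylor

variable {Q : Set (ℝ × ℝ)}

lemma averagedTaylor_add (hQ : IsCompact Q) (g k : C₂) (x : ℝ × ℝ) :
    averagedTaylor Q (g + k : C₂) x = averagedTaylor Q g x + averagedTaylor Q k x := by
  have hint (g : C₂) : IntegrableOn (fun y ↦ g.1 y + fderiv ℝ g y (x - y)) Q :=
    (continuous_taylor (contDiff_C₂ g) x).continuousOn.integrableOn_compact hQ
  rw [averagedTaylor, averagedTaylor, averagedTaylor, average, average, average,
    ← integral_add (hint g).to_average (hint k).to_average]
  congr 1
  funext y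
  rw [Submodule.coe_add, fderiv_add_of_contDiff_two (contDiff_C₂ g) (contDiff_C₂ k)]
  simp only [Pi.add_apply, _root_.add_apply]
  ring

lemma averagedTaylor_smul (r : ℝ) (g : C₂) (x : ℝ × ℝ) :
    averagedTaylor Q (r • g : C₂) x = r * averagedTaylor Q g x := by
  rw [averagedTaylor, averagedTaylor, average, average, ← integral_const_mul]
  congr 1
  funext y
  rw [Submodule.coe_smul, fderiv_smul_of_contDiff_two r (contDiff_C₂ g)]
  simp only [Pi.smul_apply, _root_.smul_apply, smul_eq_mul]
  ring

lemma averagedTaylor_eq_affine (hQ : IsCompact Q) (g : C₂) (x : ℝ × ℝ) :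
    averagedTaylor Q g x = averagedTaylor Q g 0 + x.1 * (⨍ y in Q, fderiv ℝ g y (1, 0))
      + x.2 * ⨍ y in Q, fderiv ℝ g y (0, 1) := by
  have hfderiv := (contDiff_C₂ g).continuous_fderiv two_ne_zero
  have htaylor := continuous_taylor (contDiff_C₂ g) 0
  have hint {f : ℝ × ℝ → ℝ} (hf : Continuous f) :
      Integrable f ((volume.restrict Q Set.univ)⁻¹ • volume.restrict Q) :=
    (hf.continuousOn.integrableOn_compact hQ).to_average
  have hx (y : ℝ × ℝ) : g.1 y + fderiv ℝ g y (x - y) = g.1 y + fderiv ℝ g y (0 - y)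
      + x.1 * fderiv ℝ g y (1, 0) + x.2 * fderiv ℝ g y (0, 1) := by
    have : x - y = (0 - y) + x.1 • ((1, 0) : ℝ × ℝ) + x.2 • ((0, 1) : ℝ × ℝ) := by
      ext <;> simp <;> ring
    rw [this, map_add, map_add, map_smul, map_smul, smul_eq_mul, smul_eq_mul]
    ring
  simp only [averagedTaylor, average, hx]
  rw [integral_add, integral_add, integral_const_mul, integral_const_mul]
  all_goals exact hint (by fun_prop)

/-- The error at `x` of the averaged Taylor polynomial over `Q`, as a linear functional. -/
def taylorError (hQ : IsCompact Q) (x : ℝ × ℝ) : C₂ →ₗ[ℝ] ℝ where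
  toFun g := g.1 x - averagedTaylor Q g x
  map_add' g k := by
    rw [averagedTaylor_add hQ, Submodule.coe_add, Pi.add_apply]
    ring
  map_smul' r g := by
    rw [averagedTaylor_smul, Submodule.coe_smul, Pi.smul_apply, smul_eq_mul, RingHom.id_apply,
      smul_eq_mul]
    ring

end AveragedTaylor

/-! ### Adaptive dyadic partitions -/

section DyadicIndex

/-- The index of a level-`k` dyadic subinterval of `[0, 1]` containing `u`. The intervals are
half-open, except that the last one also receives the right end point `1`. -/
def dyadicIndex (k : ℕ) (u : ℝ) : ℕ := min ⌊2 ^ k * u⌋₊ (2 ^ k - 1)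

lemma dyadicIndex_lt (k : ℕ) (u : ℝ) : dyadicIndex k u < 2 ^ k :=
  (min_le_right _ _).trans_lt (Nat.sub_lt (by positivity) one_pos)

lemma dyadicIndex_succ_div_two (k : ℕ) (u : ℝ) : dyadicIndex (k + 1) u / 2 = dyadicIndex k u := by
  have hfloor : ⌊2 ^ (k + 1) * u⌋₊ / 2 = ⌊2 ^ k * u⌋₊ := by
    rw [← Nat.floor_div_ofNat, pow_succ, mul_right_comm, mul_div_cancel_right₀ _ two_ne_zero]
  have : 0 < 2 ^ k := by positivity
  simp only [dyadicIndex, ← hfloor, pow_succ]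
  omega

lemma mem_Icc_dyadicIndex (k : ℕ) {u : ℝ} (hu : u ∈ Set.Icc (0 : ℝ) 1) :
    u ∈ Set.Icc (dyadicIndex k u / 2 ^ k : ℝ) ((dyadicIndex k u + 1) / 2 ^ k) := by
  have hk : (0 : ℝ) < 2 ^ k := by positivity
  rw [Set.mem_Icc, div_le_iff₀' hk, le_div_iff₀' hk]
  constructor
  · exact (Nat.cast_le.2 (min_le_left _ _)).trans (Nat.floor_le (mul_nonneg hk.le hu.1))
  · obtain h | h := min_choice ⌊2 ^ k * u⌋₊ (2 ^ k - 1) <;> rw [dyadicIndex, h]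
    · exact (Nat.lt_floor_add_one _).le
    · rw [Nat.cast_sub Nat.one_le_two_pow]
      push_cast
      nlinarith [hu.2]

lemma dyadicIndex_eq_of_mem_Ico {k a : ℕ} (ha : a < 2 ^ k) {u : ℝ}
    (hu : u ∈ Set.Ico (a / 2 ^ k : ℝ) ((a + 1) / 2 ^ k)) : dyadicIndex k u = a := by
  have hk : (0 : ℝ) < 2 ^ k := by positivity
  rw [Set.mem_Ico, div_le_iff₀' hk, lt_div_iff₀' hk] at hu
  have hfloor : ⌊2 ^ k * u⌋₊ = a := (Nat.floor_eq_iff (a.cast_nonneg.trans hu.1)).2 hu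
  rw [dyadicIndex, hfloor]
  omega

lemma Ico_dyadic_subset {k a : ℕ} (ha : a < 2 ^ k) :
    Set.Ico (a / 2 ^ k : ℝ) ((a + 1) / 2 ^ k) ⊆ Set.Icc 0 1 := by
  refine Set.Ico_subset_Icc_self.trans (Set.Icc_subset_Icc (by positivity) ?_)
  rw [div_le_one (by positivity)]
  exact_mod_cast ha

end DyadicIndex

/-- A dyadic square of side `2 ^ (-level)`, given by its level and the indices of its two sides. -/
@[ext]
structure DyadicSquare where
  /-- Minus the binary logarithm of the side length. -/
  level : ℕ
  /-- The integer coordinates of the lower left corner, in units of the side length. -/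
  index : ℕ × ℕ
deriving DecidableEq

namespace DyadicSquare

/-- The half-open square. -/
def ico (d : DyadicSquare) : Set (ℝ × ℝ) :=
  Set.Ico (d.index.1 / 2 ^ d.level : ℝ) ((d.index.1 + 1) / 2 ^ d.level) ×ˢ
    Set.Ico (d.index.2 / 2 ^ d.level : ℝ) ((d.index.2 + 1) / 2 ^ d.level)

/-- The closed square. -/
def icc (d : DyadicSquare) : Set (ℝ × ℝ) :=
  Set.Icc (d.index.1 / 2 ^ d.level : ℝ) ((d.index.1 + 1) / 2 ^ d.level) ×ˢ
    Set.Icc (d.index.2 / 2 ^ d.level : ℝ) ((d.index.2 + 1) / 2 ^ d.level)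

lemma isCompact_icc (d : DyadicSquare) : IsCompact d.icc := isCompact_Icc.prod isCompact_Icc

lemma convex_icc (d : DyadicSquare) : Convex ℝ d.icc := (convex_Icc _ _).prod (convex_Icc _ _)

lemma measurableSet_ico (d : DyadicSquare) : MeasurableSet d.ico :=
  measurableSet_Ico.prod measurableSet_Ico

lemma ico_ae_eq_icc (d : DyadicSquare) : d.ico =ᵐ[volume] d.icc :=
  Measure.set_prod_ae_eq Ico_ae_eq_Icc Ico_ae_eq_Icc

lemma volume_real_icc (d : DyadicSquare) : volume.real d.icc = (4 ^ d.level)⁻¹ := by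
  have hside (a : ℝ) : (a + 1) / 2 ^ d.level - a / 2 ^ d.level = (2 ^ d.level)⁻¹ := by
    rw [← sub_div, add_sub_cancel_left, one_div]
  rw [icc, Measure.volume_eq_prod, measureReal_prod_prod, Real.volume_real_Icc,
    Real.volume_real_Icc, hside, hside, max_eq_left (by positivity), ← mul_inv, ← mul_pow]
  norm_num

lemma norm_sub_le {d : DyadicSquare} {x y : ℝ × ℝ} (hx : x ∈ d.icc) (hy : y ∈ d.icc) :
    ‖y - x‖ ≤ (2 ^ d.level)⁻¹ := by
  have hside {a u v : ℝ} (hu : u ∈ Set.Icc (a / 2 ^ d.level) ((a + 1) / 2 ^ d.level))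
      (hv : v ∈ Set.Icc (a / 2 ^ d.level) ((a + 1) / 2 ^ d.level)) :
      ‖v - u‖ ≤ (2 ^ d.level)⁻¹ := by
    rw [add_div, one_div, Set.mem_Icc] at hu hv
    exact abs_le.2 ⟨by linarith, by linarith⟩
  exact max_le (hside hx.1 hy.1) (hside hx.2 hy.2)

end DyadicSquare

section DyadicSquareAt

/-- The dyadic square of side `2 ^ (-k)` containing a given point of the unit square. -/
def dyadicSquareAt (k : ℕ) (y : ℝ × ℝ) : DyadicSquare :=
  ⟨k, dyadicIndex k y.1, dyadicIndex k y.2⟩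

/-- The dyadic square of twice the side containing a given dyadic square of level at least `1`. -/
def DyadicSquare.parent (d : DyadicSquare) : DyadicSquare :=
  ⟨d.level - 1, d.index.1 / 2, d.index.2 / 2⟩

lemma parent_dyadicSquareAt (k : ℕ) (y : ℝ × ℝ) :
    (dyadicSquareAt (k + 1) y).parent = dyadicSquareAt k y := by
  simp only [DyadicSquare.parent, dyadicSquareAt, dyadicIndex_succ_div_two, add_tsub_cancel_right]

lemma dyadicSquareAt_eq_of_le {j k : ℕ} (hjk : j ≤ k) {y w : ℝ × ℝ}
    (h : dyadicSquareAt k y = dyadicSquareAt k w) : dyadicSquareAt j y = dyadicSquareAt j w := by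
  induction k, hjk using Nat.le_induction with
  | base => exact h
  | succ k _ ih => exact ih (by rw [← parent_dyadicSquareAt, h, parent_dyadicSquareAt])

lemma mem_icc_dyadicSquareAt (k : ℕ) {y : ℝ × ℝ} (hy : y ∈ unitSquare) :
    y ∈ (dyadicSquareAt k y).icc :=
  ⟨mem_Icc_dyadicIndex k hy.1, mem_Icc_dyadicIndex k hy.2⟩

lemma dyadicSquareAt_eq_of_mem_ico {k : ℕ} {y w : ℝ × ℝ} (hy : y ∈ (dyadicSquareAt k w).ico) :
    dyadicSquareAt k y = dyadicSquareAt k w := by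
  simp only [dyadicSquareAt, dyadicIndex_eq_of_mem_Ico (dyadicIndex_lt k w.1) hy.1,
    dyadicIndex_eq_of_mem_Ico (dyadicIndex_lt k w.2) hy.2]

lemma ico_dyadicSquareAt_subset (k : ℕ) (w : ℝ × ℝ) : (dyadicSquareAt k w).ico ⊆ unitSquare :=
  Set.prod_mono (Ico_dyadic_subset (dyadicIndex_lt k w.1))
    (Ico_dyadic_subset (dyadicIndex_lt k w.2))

lemma card_le_of_forall_eq_dyadicSquareAt {k : ℕ} {s : Finset DyadicSquare}
    (hs : ∀ d ∈ s, ∃ y, d = dyadicSquareAt k y) : s.card ≤ 4 ^ k := by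
  calc s.card ≤ (Finset.range (2 ^ k) ×ˢ Finset.range (2 ^ k)).card := by
        refine Finset.card_le_card_of_injOn DyadicSquare.index (fun d hd ↦ ?_) fun d hd e he h ↦ ?_
        · obtain ⟨y, rfl⟩ := hs d hd
          exact Finset.mem_product.2 ⟨Finset.mem_range.2 (dyadicIndex_lt _ _),
            Finset.mem_range.2 (dyadicIndex_lt _ _)⟩
        · obtain ⟨y, rfl⟩ := hs d hd
          obtain ⟨w, rfl⟩ := hs e he
          exact DyadicSquare.ext rfl h
    _ = (2 * 2) ^ k := by rw [Finset.card_product, Finset.card_range, mul_pow]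

lemma card_le_four_of_parent_eq {k : ℕ} {s : Finset DyadicSquare} {e : DyadicSquare}
    (hk : ∀ d ∈ s, d.level = k) (hs : ∀ d ∈ s, d.parent = e) : s.card ≤ 4 := by
  refine Finset.card_le_card_of_injOn (t := Finset.range 2 ×ˢ Finset.range 2)
    (fun d ↦ (d.index.1 % 2, d.index.2 % 2)) (fun d _ ↦ ?_) fun d hd d' hd' h ↦ ?_
  · exact Finset.mem_product.2 ⟨Finset.mem_range.2 (Nat.mod_lt _ two_pos),
      Finset.mem_range.2 (Nat.mod_lt _ two_pos)⟩
  · have hparent : d.parent = d'.parent := (hs d hd).trans (hs d' hd').symm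
    simp only [DyadicSquare.parent, DyadicSquare.mk.injEq, Prod.mk.injEq] at hparent h
    refine DyadicSquare.ext ((hk d hd).trans (hk d' hd').symm) (Prod.ext ?_ ?_) <;> omega

end DyadicSquareAt

section StoppingTime

variable {ι : Type*} [Fintype ι] (z : ι → ℝ × ℝ) (m : ℕ)

/-- The dyadic square of level `k` at `y` is sparse if the proportion of the points `z i` lying in
it is at most `16 ^ (-m)` times the inverse of its area. -/
def IsSparse (k : ℕ) (y : ℝ × ℝ) : Prop :=
  Finset.card {i | dyadicSquareAt k (z i) = dyadicSquareAt k y} * 16 ^ m ≤ Fintype.card ι * 4 ^ k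

lemma isSparse_two_mul (y : ℝ × ℝ) : IsSparse z m (2 * m) y := by
  rw [IsSparse, pow_mul]
  exact Nat.mul_le_mul_right _ (Finset.card_le_univ _)

lemma exists_isSparse (y : ℝ × ℝ) : ∃ k, IsSparse z m k y := ⟨2 * m, isSparse_two_mul z m y⟩

open Classical in
/-- The first level at which the dyadic square at `y` is sparse. -/
def stoppingLevel (y : ℝ × ℝ) : ℕ := Nat.find (exists_isSparse z m y)

lemma isSparse_stoppingLevel (y : ℝ × ℝ) : IsSparse z m (stoppingLevel z m y) y := by
  classical exact Nat.find_spec (exists_isSparse z m y)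

lemma not_isSparse_of_lt_stoppingLevel {k : ℕ} {y : ℝ × ℝ} (hk : k < stoppingLevel z m y) :
    ¬ IsSparse z m k y := by
  classical exact Nat.find_min (exists_isSparse z m y) hk

lemma stoppingLevel_le {k : ℕ} {y : ℝ × ℝ} (h : IsSparse z m k y) : stoppingLevel z m y ≤ k := by
  classical exact Nat.find_min' (exists_isSparse z m y) h

/-- The leaf at `y` of the adaptive dyadic partition: the largest sparse dyadic square at `y`. -/
def leaf (y : ℝ × ℝ) : DyadicSquare := dyadicSquareAt (stoppingLevel z m y) y

lemma leaf_eq_of_mem_ico {y w : ℝ × ℝ} (hy : y ∈ (leaf z m w).ico) :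
    leaf z m y = leaf z m w := by
  have hsquare := dyadicSquareAt_eq_of_mem_ico hy
  have hsparse {j : ℕ} (hj : j ≤ stoppingLevel z m w) : IsSparse z m j y ↔ IsSparse z m j w := by
    rw [IsSparse, dyadicSquareAt_eq_of_le hj hsquare, IsSparse]
  have hle : stoppingLevel z m y ≤ stoppingLevel z m w :=
    stoppingLevel_le z m ((hsparse le_rfl).2 (isSparse_stoppingLevel z m w))
  have hlevel : stoppingLevel z m y = stoppingLevel z m w :=
    hle.antisymm (stoppingLevel_le z m ((hsparse hle).1 (isSparse_stoppingLevel z m y)))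
  rw [leaf, hlevel, hsquare, leaf]

/-- The leaves of the adaptive dyadic partition that contain some point `z i`. -/
def leaves : Finset DyadicSquare := Finset.univ.image fun i ↦ leaf z m (z i)

lemma leaf_mem_leaves (i : ι) : leaf z m (z i) ∈ leaves z m :=
  Finset.mem_image_of_mem _ (Finset.mem_univ i)

lemma exists_eq_leaf_of_mem_leaves {d : DyadicSquare} (hd : d ∈ leaves z m) :
    ∃ i, leaf z m (z i) = d := by
  simpa only [leaves, Finset.mem_image, Finset.mem_univ, true_and] using hd

lemma ico_subset_of_mem_leaves {d : DyadicSquare} (hd : d ∈ leaves z m) : d.ico ⊆ unitSquare := by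
  obtain ⟨i, rfl⟩ := exists_eq_leaf_of_mem_leaves z m hd
  exact ico_dyadicSquareAt_subset _ _

lemma pairwiseDisjoint_leaves :
    (leaves z m : Set DyadicSquare).PairwiseDisjoint DyadicSquare.ico := by
  intro d hd e he hde
  obtain ⟨i, rfl⟩ := exists_eq_leaf_of_mem_leaves z m hd
  obtain ⟨j, rfl⟩ := exists_eq_leaf_of_mem_leaves z m he
  refine Set.disjoint_left.2 fun y hyd hye ↦ hde ?_
  rw [← leaf_eq_of_mem_ico z m hyd, leaf_eq_of_mem_ico z m hye]

lemma card_leaf_eq_mul_le {d : DyadicSquare} (hd : d ∈ leaves z m) :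
    Finset.card {i | leaf z m (z i) = d} * 16 ^ m ≤ Fintype.card ι * 4 ^ d.level := by
  obtain ⟨i, rfl⟩ := exists_eq_leaf_of_mem_leaves z m hd
  refine (Nat.mul_le_mul_right _ (Finset.card_le_card ?_)).trans (isSparse_stoppingLevel z m (z i))
  intro j hj
  rw [Finset.mem_filter_univ] at hj ⊢
  have hlevel : stoppingLevel z m (z j) = stoppingLevel z m (z i) :=
    congrArg DyadicSquare.level hj
  rwa [leaf, leaf, hlevel] at hj

/-- The dyadic squares of level `k` containing some point `z i` that are not sparse. -/
def crowdedSquares (k : ℕ) : Finset DyadicSquare :=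
  {d ∈ Finset.univ.image fun i ↦ dyadicSquareAt k (z i) |
    Fintype.card ι * 4 ^ k < Finset.card {i | dyadicSquareAt k (z i) = d} * 16 ^ m}

lemma card_crowdedSquares_mul_le [Nonempty ι] (k : ℕ) :
    (crowdedSquares z m k).card * 4 ^ k ≤ 16 ^ m := by
  let count (d : DyadicSquare) : ℕ := Finset.card {i | dyadicSquareAt k (z i) = d}
  have hcount : ∑ d ∈ crowdedSquares z m k, count d ≤ Fintype.card ι :=
    calc ∑ d ∈ crowdedSquares z m k, count d
        ≤ ∑ d ∈ Finset.univ.image fun i ↦ dyadicSquareAt k (z i), count d :=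
          Finset.sum_le_sum_of_subset (Finset.filter_subset _ _)
      _ = Fintype.card ι := (Finset.card_eq_sum_card_image _ _).symm
  refine Nat.le_of_mul_le_mul_left ?_ (Fintype.card_pos (α := ι))
  calc Fintype.card ι * ((crowdedSquares z m k).card * 4 ^ k)
      = ∑ d ∈ crowdedSquares z m k, Fintype.card ι * 4 ^ k := by
        rw [Finset.sum_const, smul_eq_mul, mul_left_comm]
    _ ≤ ∑ d ∈ crowdedSquares z m k, count d * 16 ^ m :=
        Finset.sum_le_sum fun d hd ↦ (Finset.mem_filter.1 hd).2.le
    _ ≤ Fintype.card ι * 16 ^ m := by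
        rw [← Finset.sum_mul]
        exact Nat.mul_le_mul_right _ hcount

lemma parent_mem_crowdedSquares {k : ℕ} {d : DyadicSquare} (hd : d ∈ leaves z m)
    (hk : d.level = k + 1) : d.parent ∈ crowdedSquares z m k := by
  obtain ⟨i, rfl⟩ := exists_eq_leaf_of_mem_leaves z m hd
  have hlevel : stoppingLevel z m (z i) = k + 1 := hk
  rw [leaf, hlevel, parent_dyadicSquareAt]
  refine Finset.mem_filter.2 ⟨Finset.mem_image_of_mem _ (Finset.mem_univ i), not_le.1 ?_⟩
  exact not_isSparse_of_lt_stoppingLevel z m (hlevel ▸ k.lt_succ_self)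

lemma card_leaves_level_le (k : ℕ) : Finset.card {d ∈ leaves z m | d.level = k} ≤ 4 ^ k := by
  refine card_le_of_forall_eq_dyadicSquareAt fun d hd ↦ ?_
  obtain ⟨hleaf, rfl⟩ := Finset.mem_filter.1 hd
  obtain ⟨i, rfl⟩ := exists_eq_leaf_of_mem_leaves z m hleaf
  exact ⟨z i, rfl⟩

lemma card_leaves_level_succ_mul_le [Nonempty ι] (k : ℕ) :
    Finset.card {d ∈ leaves z m | d.level = k + 1} * 4 ^ k ≤ 4 * 16 ^ m := by
  have hcard :
      Finset.card {d ∈ leaves z m | d.level = k + 1} ≤ 4 * (crowdedSquares z m k).card := by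
    refine Finset.card_le_mul_card_image_of_maps_to (f := DyadicSquare.parent)
      (fun d hd ↦ ?_) 4 fun e _ ↦ ?_
    · exact parent_mem_crowdedSquares z m (Finset.mem_filter.1 hd).1 (Finset.mem_filter.1 hd).2
    · refine card_le_four_of_parent_eq (k := k + 1) (e := e) (fun d hd ↦ ?_) fun d hd ↦ ?_
      · exact (Finset.mem_filter.1 (Finset.mem_filter.1 hd).1).2
      · exact (Finset.mem_filter.1 hd).2
  calc _ ≤ 4 * (crowdedSquares z m k).card * 4 ^ k := Nat.mul_le_mul_right _ hcard
    _ ≤ 4 * 16 ^ m := by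
        rw [mul_assoc]
        exact Nat.mul_le_mul_left _ (card_crowdedSquares_mul_le z m k)

lemma sum_range_le_eight_mul_four_pow {m : ℕ} {A : ℕ → ℕ} (hA : ∀ k, A k ≤ 4 ^ k)
    (hA_succ : ∀ k, A (k + 1) * 4 ^ k ≤ 4 * 16 ^ m) :
    ∑ k ∈ Finset.range (2 * m + 1), A k ≤ 8 * 4 ^ m := by
  have hcoarse : ∑ k ∈ Finset.range (m + 1), A k ≤ 2 * 4 ^ m := by
    have hgeom := Nat.geomSum_eq (show 2 ≤ 4 by norm_num) (m + 1)
    calc _ ≤ ∑ k ∈ Finset.range (m + 1), 4 ^ k := Finset.sum_le_sum fun k _ ↦ hA k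
      _ ≤ 2 * 4 ^ m := by
          rw [hgeom, pow_succ]
          omega
  have hfine (j : ℕ) : A (m + 1 + j) ≤ 4 * 4 ^ m / 4 ^ j := by
    rw [Nat.le_div_iff_mul_le (by positivity)]
    refine Nat.le_of_mul_le_mul_left ?_ (show 0 < 4 ^ m by positivity)
    calc 4 ^ m * (A (m + 1 + j) * 4 ^ j) = A (m + j + 1) * 4 ^ (m + j) := by
          rw [show m + 1 + j = m + j + 1 by ring, pow_add]
          ring
      _ ≤ 4 * 16 ^ m := hA_succ (m + j)
      _ = 4 ^ m * (4 * 4 ^ m) := by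
          rw [show 16 = 4 * 4 from rfl, mul_pow]
          ring
  have hgeom := Nat.geom_sum_le (show 2 ≤ 4 by norm_num) (4 * 4 ^ m) m
  calc ∑ k ∈ Finset.range (2 * m + 1), A k
      = ∑ k ∈ Finset.range (m + 1), A k + ∑ j ∈ Finset.range m, A (m + 1 + j) := by
        rw [← Finset.sum_range_add, show 2 * m + 1 = m + 1 + m by ring]
    _ ≤ 2 * 4 ^ m + ∑ j ∈ Finset.range m, 4 * 4 ^ m / 4 ^ j :=
        add_le_add hcoarse (Finset.sum_le_sum fun j _ ↦ hfine j)
    _ ≤ 8 * 4 ^ m := by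
        omega

lemma card_leaves_le [Nonempty ι] : (leaves z m).card ≤ 8 * 4 ^ m := by
  have hlevel : ∀ d ∈ leaves z m, d.level ∈ Finset.range (2 * m + 1) := by
    intro d hd
    obtain ⟨i, rfl⟩ := exists_eq_leaf_of_mem_leaves z m hd
    exact Finset.mem_range_succ_iff.2 (stoppingLevel_le z m (isSparse_two_mul z m (z i)))
  rw [Finset.card_eq_sum_card_fiberwise hlevel]
  exact sum_range_le_eight_mul_four_pow (card_leaves_level_le z m)
    (card_leaves_level_succ_mul_le z m)

end StoppingTime

/-! ### The noise in sums of components -/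

open Matrix

lemma taylorError_icc_sq_le {d : DyadicSquare} {x : ℝ × ℝ} (hx : x ∈ d.icc) (g : C₂) :
    taylorError d.isCompact_icc x g ^ 2 ≤
      6 * (4 ^ d.level : ℝ)⁻¹ * ∫ y in d.ico, hessianInner g g y := by
  have hvol : volume.real d.icc ≠ 0 := by
    rw [DyadicSquare.volume_real_icc]
    positivity
  have h := sub_averagedTaylor_sq_le (contDiff_C₂ g) d.isCompact_icc d.convex_icc
    (fun h₀ ↦ hvol (by rw [measureReal_def, h₀, ENNReal.toReal_zero])) hx
    fun y hy ↦ DyadicSquare.norm_sub_le hx hy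
  rw [DyadicSquare.volume_real_icc, inv_inv, ← setIntegral_congr_set d.ico_ae_eq_icc,
    show (4 : ℝ) = 2 ^ 2 by norm_num, ← pow_mul] at h
  refine h.trans_eq ?_
  rw [show (4 : ℝ) = 2 ^ 2 by norm_num, ← pow_mul]
  field_simp
  ring

section LeafTaylor

variable {ι : Type*} [Fintype ι] (z : ι → ℝ × ℝ) (m : ℕ)

/-- The errors at the points `z i` of the averaged Taylor polynomials over the leaves containing
them. -/
def leafRemainder : C₂ →ₗ[ℝ] ι → ℝ :=
  LinearMap.pi fun i ↦ taylorError (leaf z m (z i)).isCompact_icc (z i)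

lemma sum_leaf_le {F : DyadicSquare → ℝ} (hF : ∀ d ∈ leaves z m, 0 ≤ F d) :
    ∑ i, (4 ^ (leaf z m (z i)).level : ℝ)⁻¹ * F (leaf z m (z i)) ≤
      Fintype.card ι / 16 ^ m * ∑ d ∈ leaves z m, F d := by
  classical
  rw [Finset.sum_comp (fun d ↦ (4 ^ d.level : ℝ)⁻¹ * F d) fun i ↦ leaf z m (z i), Finset.mul_sum]
  refine Finset.sum_le_sum fun d hd ↦ ?_
  rw [nsmul_eq_mul, ← mul_assoc]
  refine mul_le_mul_of_nonneg_right ?_ (hF d hd)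
  rw [← div_eq_mul_inv, div_le_div_iff₀ (by positivity) (by positivity)]
  exact_mod_cast card_leaf_eq_mul_le z m hd

lemma setIntegral_hessianInner_le_roughnessForm {s : Set (ℝ × ℝ)} (hs : s ⊆ unitSquare) (g : C₂) :
    ∫ y in s, hessianInner g g y ≤ roughnessForm g g := by
  rw [roughnessForm_apply]
  exact setIntegral_mono_set (integrableOn_hessianInner g g subset_rfl)
    (ae_of_all _ (hessianInner_self_nonneg _)) hs.eventuallyLE

variable {z}

lemma mem_icc_leaf (hz : ∀ i, z i ∈ unitSquare) (i : ι) : z i ∈ (leaf z m (z i)).icc :=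
  mem_icc_dyadicSquareAt _ (hz i)

lemma leafRemainder_sq_le (hz : ∀ i, z i ∈ unitSquare) (g : C₂) (i : ι) :
    leafRemainder z m g i ^ 2 ≤ 6 * (4 ^ (leaf z m (z i)).level : ℝ)⁻¹ * roughnessForm g g :=
  (taylorError_icc_sq_le (mem_icc_leaf m hz i) g).trans <| mul_le_mul_of_nonneg_left
    (setIntegral_hessianInner_le_roughnessForm
      (ico_subset_of_mem_leaves z m (leaf_mem_leaves z m i)) g) (by positivity)

lemma leafRemainder_dotProduct_self_le (hz : ∀ i, z i ∈ unitSquare) (g : C₂) :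
    leafRemainder z m g ⬝ᵥ leafRemainder z m g ≤
      6 * Fintype.card ι / 16 ^ m * roughnessForm g g := by
  have hsub : ⋃ d ∈ leaves z m, d.ico ⊆ unitSquare :=
    Set.iUnion₂_subset fun d hd ↦ ico_subset_of_mem_leaves z m hd
  calc leafRemainder z m g ⬝ᵥ leafRemainder z m g
      ≤ ∑ i, (4 ^ (leaf z m (z i)).level : ℝ)⁻¹ *
          (6 * ∫ y in (leaf z m (z i)).ico, hessianInner g g y) := by
        refine Finset.sum_le_sum fun i _ ↦ ?_
        rw [← sq, mul_left_comm, ← mul_assoc]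
        exact taylorError_icc_sq_le (mem_icc_leaf m hz i) g
    _ ≤ Fintype.card ι / 16 ^ m * ∑ d ∈ leaves z m, 6 * ∫ y in d.ico, hessianInner g g y :=
        sum_leaf_le z m (F := fun d ↦ 6 * ∫ y in d.ico, hessianInner g g y) fun d _ ↦
          mul_nonneg (by norm_num) (integral_nonneg (hessianInner_self_nonneg _))
    _ = 6 * Fintype.card ι / 16 ^ m * ∫ y in ⋃ d ∈ leaves z m, d.ico, hessianInner g g y := by
        rw [integral_biUnion_finset _ (fun d _ ↦ d.measurableSet_ico) (pairwiseDisjoint_leaves z m)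
          fun d hd ↦ integrableOn_hessianInner g g (ico_subset_of_mem_leaves z m hd),
          ← Finset.mul_sum]
        ring
    _ ≤ 6 * Fintype.card ι / 16 ^ m * roughnessForm g g :=
        mul_le_mul_of_nonneg_left (setIntegral_hessianInner_le_roughnessForm hsub g) (by positivity)

variable (z)

/-- The values at the points `z i` of `1` and of the two coordinates on each single leaf. -/
def leafAffineBasis (q : leaves z m × Fin 3) (i : ι) : ℝ :=
  if leaf z m (z i) = q.1 then ![1, (z i).1, (z i).2] q.2 else 0

/-- The values at the points `z i` of the functions that are affine on each leaf. -/
def leafAffine : Submodule ℝ (ι → ℝ) := Submodule.span ℝ (Set.range (leafAffineBasis z m))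

lemma finrank_leafAffine_le [Nonempty ι] : Module.finrank ℝ (leafAffine z m) ≤ 24 * 4 ^ m := by
  refine (finrank_range_le_card (leafAffineBasis z m)).trans ?_
  rw [Fintype.card_prod, Fintype.card_coe, Fintype.card_fin]
  have := card_leaves_le z m
  omega

lemma sub_leafRemainder_mem_leafAffine (g : C₂) :
    (fun i ↦ g.1 (z i)) - leafRemainder z m g ∈ leafAffine z m := by
  let coeff (d : DyadicSquare) : Fin 3 → ℝ := ![averagedTaylor d.icc g 0,
    ⨍ y in d.icc, fderiv ℝ g y (1, 0), ⨍ y in d.icc, fderiv ℝ g y (0, 1)]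
  have hexpand : (fun i ↦ g.1 (z i)) - leafRemainder z m g
      = ∑ q : leaves z m × Fin 3, coeff q.1 q.2 • leafAffineBasis z m q := by
    funext i
    let leafAt : leaves z m := ⟨leaf z m (z i), leaf_mem_leaves z m i⟩
    rw [Finset.sum_apply, Fintype.sum_prod_type, Finset.sum_eq_single leafAt]
    · have haffine := averagedTaylor_eq_affine (leaf z m (z i)).isCompact_icc g (z i)
      simp only [Pi.sub_apply, leafRemainder, LinearMap.pi_apply, taylorError, LinearMap.coe_mk,
        AddHom.coe_mk, sub_sub_cancel, haffine, Fin.sum_univ_three, Pi.smul_apply, smul_eq_mul,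
        leafAffineBasis, leafAt, if_true, coeff, cons_val_zero, cons_val_one, cons_val]
      ring
    · intro d _ hd
      have hne : leaf z m (z i) ≠ d := fun h ↦ hd (Subtype.ext h.symm)
      simp only [Pi.smul_apply, leafAffineBasis, if_neg hne, smul_zero, Finset.sum_const_zero]
    · exact fun h ↦ absurd (Finset.mem_univ _) h
  rw [hexpand]
  exact Submodule.sum_mem _ fun q _ ↦ Submodule.smul_mem _ _ (Submodule.subset_span ⟨q, rfl⟩)

/-- The values at the points `z i` of a function of roughness `Ω` lie in `V` up to a remainder whose
inner product with any vector `a` is at most `√(ν Ω)` times the seminorm of `a` defined by `M`. -/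
def ControlsValues (V : Submodule ℝ (ι → ℝ)) (M : Matrix ι ι ℝ) (ν : ℝ) : Prop :=
  ∀ g : C₂, ∃ r : ι → ℝ, (fun i ↦ g.1 (z i)) - r ∈ V ∧
    ∀ a, (a ⬝ᵥ r) ^ 2 ≤ (a ⬝ᵥ M *ᵥ a) * (ν * roughnessForm g g)

variable {z}

theorem exists_controlsValues [Nonempty ι] (hz : ∀ i, z i ∈ unitSquare) :
    ∃ (V : Submodule ℝ (ι → ℝ)) (M : Matrix ι ι ℝ), Module.finrank ℝ V ≤ 24 * 4 ^ m ∧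
      IsTraceContraction M (8 * 4 ^ m) ∧ ControlsValues z V M (6 * Fintype.card ι / 16 ^ m) := by
  let b (i : ι) : ℝ := 16 ^ m / Fintype.card ι * (4 ^ (leaf z m (z i)).level)⁻¹
  have hb (i : ι) : b i * (6 * Fintype.card ι / 16 ^ m) = 6 * (4 ^ (leaf z m (z i)).level)⁻¹ := by
    simp only [b]
    field_simp
  have hsum : ∑ i, b i ≤ 8 * 4 ^ m := by
    calc ∑ i, b i ≤ 16 ^ m / Fintype.card ι *
          (Fintype.card ι / 16 ^ m * ∑ _ ∈ leaves z m, (1 : ℝ)) := by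
          rw [← Finset.mul_sum]
          refine mul_le_mul_of_nonneg_left ?_ (by positivity)
          simpa only [mul_one] using sum_leaf_le z m (F := fun _ ↦ 1) fun _ _ ↦ zero_le_one
      _ = (leaves z m).card := by
          rw [Finset.sum_const, nsmul_eq_mul, mul_one]
          field_simp
      _ ≤ 8 * 4 ^ m := by exact_mod_cast card_leaves_le z m
  obtain ⟨M, hM, hrem⟩ := exists_isTraceContraction_of_isPosSemidef
    (isPosSemidef_roughnessForm.smul (by positivity : (0 : ℝ) ≤ 6 * Fintype.card ι / 16 ^ m))
    (L := leafRemainder z m) (b := b) (fun i ↦ by positivity)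
    (fun g i ↦ by
      rw [LinearMap.smul_apply, LinearMap.smul_apply, smul_eq_mul, ← mul_assoc, hb]
      exact leafRemainder_sq_le m hz g i)
    (leafRemainder_dotProduct_self_le m hz)
  exact ⟨leafAffine z m, M, finrank_leafAffine_le z m, hM.mono hsum,
    fun g ↦ ⟨leafRemainder z m g, sub_leafRemainder_mem_leafAffine z m g, fun a ↦ hrem a g⟩⟩

end LeafTaylor

lemma two_mul_le_inv_mul_add_mul {x A B θ : ℝ} (hA : 0 ≤ A) (hB : 0 ≤ B) (hθ : 0 < θ)
    (h : x ^ 2 ≤ A * B) : 2 * x ≤ θ⁻¹ * A + θ * B := by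
  refine le_of_abs_le (abs_le_of_sq_le_sq ?_ (by positivity))
  have hAB : θ⁻¹ * A * (θ * B) = A * B := by field_simp
  nlinarith [sq_nonneg (θ⁻¹ * A - θ * B)]

section NoiseBound

variable {ι I : Type*} [Fintype ι]

lemma sum_dotProduct_self_le (S : Finset I) (r : I → ι → ℝ) :
    (∑ s ∈ S, r s) ⬝ᵥ (∑ s ∈ S, r s) ≤ S.card * ∑ s ∈ S, r s ⬝ᵥ r s := by
  simp only [dotProduct, Finset.sum_apply, ← sq]
  rw [Finset.sum_comm, Finset.mul_sum]
  exact Finset.sum_le_sum fun i _ ↦ sq_sum_le_card_mul_sum_sq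

lemma sub_dotProduct_self_le (f r : ι → ℝ) :
    (f - r) ⬝ᵥ (f - r) ≤ 2 * (f ⬝ᵥ f) + 2 * (r ⬝ᵥ r) := by
  simp only [dotProduct, Finset.mul_sum, ← Finset.sum_add_distrib, Pi.sub_apply]
  exact Finset.sum_le_sum fun i _ ↦ by nlinarith [sq_nonneg (f i + r i)]

lemma IsTraceContraction.dotProduct_mulVec_nonneg {M : Matrix ι ι ℝ} {D : ℝ}
    (hM : IsTraceContraction M D) (a : ι → ℝ) : 0 ≤ a ⬝ᵥ M *ᵥ a :=
  hM.posSemidef.dotProduct_mulVec_nonneg a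

lemma ControlsValues.exists_dotProduct_self_le {z : ι → ℝ × ℝ} {V : Submodule ℝ (ι → ℝ)}
    {M : Matrix ι ι ℝ} {ν D : ℝ} (h : ControlsValues z V M ν) (hM : IsTraceContraction M D)
    (hν : 0 ≤ ν) (g : C₂) :
    ∃ r : ι → ℝ, (fun i ↦ g.1 (z i)) - r ∈ V ∧ r ⬝ᵥ r ≤ ν * roughnessForm g g ∧
      ∀ a, (a ⬝ᵥ r) ^ 2 ≤ (a ⬝ᵥ M *ᵥ a) * (ν * roughnessForm g g) := by
  obtain ⟨r, hrV, hr⟩ := h g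
  have hg : 0 ≤ ν * roughnessForm g g := mul_nonneg hν (roughnessForm_self_nonneg g)
  refine ⟨r, hrV, ?_, hr⟩
  have hself : 0 ≤ r ⬝ᵥ r := dotProduct_self_star_nonneg r
  obtain hr₀ | hr₀ := hself.eq_or_lt
  · exact hr₀.ge.trans hg
  · refine le_of_mul_le_mul_left ?_ hr₀
    rw [← sq]
    exact (hr r).trans (mul_le_mul_of_nonneg_right (hM.dotProduct_mulVec_le r) hg)

variable {z : I → ι → ℝ × ℝ} {V : I → Submodule ℝ (ι → ℝ)} {W : Submodule ℝ (ι → ℝ)}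
  {M : I → Matrix ι ι ℝ} {P : Matrix ι ι ℝ} {ν D D' U θ : ℝ} {S : Finset I} {a : ι → ℝ}

theorem two_mul_dotProduct_sum_le (hM : ∀ s, IsTraceContraction (M s) D)
    (hV : ∀ s, ControlsValues (z s) (V s) (M s) ν) (hP : IsTraceContraction P D')
    (hPW : ∀ a, ∀ v ∈ W, (a ⬝ᵥ v) ^ 2 ≤ (a ⬝ᵥ P *ᵥ a) * (v ⬝ᵥ v)) (hVW : ∀ s ∈ S, V s ≤ W)
    (hν : 0 ≤ ν) (hMU : ∀ s, a ⬝ᵥ M s *ᵥ a ≤ U) (hPU : a ⬝ᵥ P *ᵥ a ≤ U) (hθ : 0 < θ)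
    (g : I → C₂) {f : ι → ℝ} (hf : f = ∑ s ∈ S, fun i ↦ (g s).1 (z s i)) :
    2 * (a ⬝ᵥ f) ≤ θ⁻¹ * ((S.card + 1) * U) + 2 * θ * (f ⬝ᵥ f)
      + θ * (ν * (2 * S.card + 1) * ∑ s ∈ S, roughnessForm (g s) (g s)) := by
  choose r hrV hr_self hr using fun s ↦ (hV s).exists_dotProduct_self_le (hM s) hν (g s)
  set R := ∑ s ∈ S, r s
  have haffine : f - R ∈ W := by
    rw [hf, ← Finset.sum_sub_distrib]
    exact Submodule.sum_mem _ fun s hs ↦ hVW s hs (hrV s)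
  have hR : R ⬝ᵥ R ≤ S.card * (ν * ∑ s ∈ S, roughnessForm (g s) (g s)) := by
    refine (sum_dotProduct_self_le S r).trans ?_
    rw [Finset.mul_sum _ _ ν]
    gcongr with s
    exact hr_self s
  have ha_affine : 2 * (a ⬝ᵥ (f - R)) ≤ θ⁻¹ * U + θ * ((f - R) ⬝ᵥ (f - R)) := by
    refine (two_mul_le_inv_mul_add_mul (hP.dotProduct_mulVec_nonneg a)
      (dotProduct_self_star_nonneg _) hθ (hPW a _ haffine)).trans ?_
    gcongr
    exact le_rfl
  have ha_remainder (s : I) :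
      2 * (a ⬝ᵥ r s) ≤ θ⁻¹ * U + θ * (ν * roughnessForm (g s) (g s)) := by
    refine (two_mul_le_inv_mul_add_mul ((hM s).dotProduct_mulVec_nonneg a)
      (mul_nonneg hν (roughnessForm_self_nonneg _)) hθ (hr s a)).trans ?_
    gcongr
    exact hMU s
  have haR : 2 * (a ⬝ᵥ R) ≤
      S.card * (θ⁻¹ * U) + θ * (ν * ∑ s ∈ S, roughnessForm (g s) (g s)) := by
    rw [dotProduct_sum, Finset.mul_sum]
    refine (Finset.sum_le_sum fun s _ ↦ ha_remainder s).trans_eq ?_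
    rw [Finset.sum_add_distrib, Finset.sum_const, nsmul_eq_mul, ← Finset.mul_sum, ← Finset.mul_sum]
  have hsplit : a ⬝ᵥ f = a ⬝ᵥ (f - R) + a ⬝ᵥ R := by rw [dotProduct_sub, sub_add_cancel]
  have hself := mul_le_mul_of_nonneg_left
    ((sub_dotProduct_self_le f R).trans (add_le_add_right (mul_le_mul_of_nonneg_left hR
      zero_le_two) _)) hθ.le
  linarith

end NoiseBound

section TupleFamily

variable {ι I : Type*} [Fintype ι]

lemma finrank_iSup_le_card_mul {E J : Type*} [AddCommGroup E] [Module ℝ E]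
    [FiniteDimensional ℝ E] [Fintype J] {V : J → Submodule ℝ E} {d : ℕ}
    (hV : ∀ j, Module.finrank ℝ (V j) ≤ d) :
    Module.finrank ℝ (⨆ j, V j : Submodule ℝ E) ≤ Fintype.card J * d := by
  classical
  suffices h : ∀ s : Finset J, Module.finrank ℝ (s.sup V : Submodule ℝ E) ≤ s.card * d by
    have huniv := h Finset.univ
    rwa [Finset.sup_univ_eq_iSup, Finset.card_univ] at huniv
  intro s
  induction s using Finset.induction_on with
  | empty => simp
  | insert j s hj ih =>
    rw [Finset.sup_insert, Finset.card_insert_of_notMem hj, add_one_mul, add_comm]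
    exact (Submodule.finrank_add_le_finrank_add_finrank _ _).trans (add_le_add (hV j) ih)

lemma exists_tuple_of_card_le [Nonempty I] {S : Finset I} {q : ℕ} (hS : S.card ≤ q) :
    ∃ τ : Fin q → I, ∀ s ∈ S, ∃ k, τ k = s := by
  obtain ⟨e⟩ : Nonempty (S ↪ Fin q) := Function.Embedding.nonempty_of_card_le (by simpa using hS)
  exact ⟨Function.extend e Subtype.val fun _ ↦ Classical.arbitrary I,
    fun s hs ↦ ⟨e ⟨s, hs⟩, e.injective.extend_apply _ _ ⟨s, hs⟩⟩⟩

theorem exists_isTraceContraction_forall_two_mul_dotProduct_le [Nonempty ι] [Nonempty I]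
    {z : I → ι → ℝ × ℝ} (hz : ∀ s i, z s i ∈ unitSquare) (q m : ℕ) :
    ∃ N : I ⊕ (Fin q → I) → Matrix ι ι ℝ, (∀ j, IsTraceContraction (N j) ((24 * q + 8) * 4 ^ m)) ∧
      ∀ (a : ι → ℝ) (U : ℝ), (∀ j, a ⬝ᵥ N j *ᵥ a ≤ U) →
      ∀ (S : Finset I), S.card ≤ q → ∀ (g : I → C₂) (f : ι → ℝ),
      f = ∑ s ∈ S, (fun i ↦ (g s).1 (z s i)) → ∀ θ, 0 < θ →
      2 * (a ⬝ᵥ f) ≤ θ⁻¹ * ((q + 1) * U) + 2 * θ * (f ⬝ᵥ f)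
        + θ * (6 * Fintype.card ι / 16 ^ m * (2 * q + 1) *
          ∑ s ∈ S, roughnessForm (g s) (g s)) := by
  choose V M hV hM hVM using fun s ↦ exists_controlsValues m (hz s)
  choose P hP hPV using fun τ : Fin q → I ↦ exists_isTraceContraction_finrank (⨆ k, V (τ k))
  have hfinrank (τ : Fin q → I) :
      (Module.finrank ℝ (⨆ k, V (τ k) : Submodule ℝ (ι → ℝ)) : ℝ) ≤ 24 * q * 4 ^ m := by
    have := finrank_iSup_le_card_mul fun k ↦ hV (τ k)
    rw [Fintype.card_fin] at this
    calc _ ≤ ((q * (24 * 4 ^ m) : ℕ) : ℝ) := by exact_mod_cast this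
      _ = 24 * q * 4 ^ m := by push_cast; ring
  refine ⟨Sum.elim M P, ?_, fun a U hU S hS g f hf θ hθ ↦ ?_⟩
  · have hm : (0 : ℝ) < 4 ^ m := by positivity
    rintro (s | τ)
    · exact (hM s).mono (by nlinarith [mul_nonneg q.cast_nonneg hm.le])
    · exact (hP τ).mono (by linarith [hfinrank τ])
  · obtain ⟨τ, hτ⟩ := exists_tuple_of_card_le hS
    have hVτ : ∀ s ∈ S, V s ≤ ⨆ k, V (τ k) := fun s hs ↦ by
      obtain ⟨k, rfl⟩ := hτ s hs
      exact le_iSup (fun k ↦ V (τ k)) k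
    have hU₀ : 0 ≤ U := ((hP τ).dotProduct_mulVec_nonneg a).trans (hU (Sum.inr τ))
    have hrough : 0 ≤ ∑ s ∈ S, roughnessForm (g s) (g s) :=
      Finset.sum_nonneg fun s _ ↦ roughnessForm_self_nonneg (g s)
    refine (two_mul_dotProduct_sum_le hM hVM (hP τ) (hPV τ) hVτ (by positivity)
      (fun s ↦ hU (Sum.inl s)) (hU (Sum.inr τ)) hθ g hf).trans ?_
    gcongr

end TupleFamily

/-! ### The penalised estimator -/

lemma sum_add_sum_ite_lt_eq_sum {α A : Type*} [Fintype α] [LinearOrder α] [AddCommMonoid A]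
    {a : α → A} {b : α → α → A} {F : α × α → A} (hdiag : ∀ j, F (j, j) = a j)
    (hlt : ∀ j k, j < k → F (j, k) = b j k) (hgt : ∀ j k, k < j → F (j, k) = 0) :
    ((∑ j, a j) + ∑ j, ∑ k, if j < k then b j k else 0) = ∑ s, F s := by
  rw [Fintype.sum_prod_type, ← Finset.sum_add_distrib]
  refine Finset.sum_congr rfl fun j _ ↦ ?_
  have hF (k : α) : F (j, k) = (if k = j then a j else 0) + if j < k then b j k else 0 := by
    obtain h | rfl | h := lt_trichotomy j k
    · rw [hlt j k h, if_neg h.ne', if_pos h, zero_add]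
    · rw [hdiag, if_pos rfl, if_neg (lt_irrefl _), add_zero]
    · rw [hgt j k h, if_neg h.ne, if_neg h.not_gt, zero_add]
  simp only [hF, Finset.sum_add_distrib, Finset.sum_ite_eq', Finset.mem_univ, if_true]

namespace AddRep

variable {p : ℕ} (R : AddRep p)

/-- The components of `R` as functions on the plane indexed by arbitrary pairs: the main effect of
`j` sits at `(j, j)` and depends on the first variable only, the interactions sit at `j < k`, and
the other entries vanish. -/
def component (s : Fin p × Fin p) : C₂ :=
  if s.1 = s.2 then ⟨fun q ↦ R.main s.1 q.1, mem_C₂.2 ((R.smooth_main s.1).comp contDiff_fst)⟩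
  else if s.1 < s.2 then ⟨fun q ↦ R.inter s.1 s.2 q.1 q.2, mem_C₂.2 (R.smooth_inter _ _)⟩
  else 0

lemma component_diag (j : Fin p) :
    R.component (j, j) =
      ⟨fun q ↦ R.main j q.1, mem_C₂.2 ((R.smooth_main j).comp contDiff_fst)⟩ :=
  if_pos rfl

lemma component_of_lt {j k : Fin p} (h : j < k) :
    R.component (j, k) = ⟨fun q ↦ R.inter j k q.1 q.2, mem_C₂.2 (R.smooth_inter j k)⟩ :=
  (if_neg h.ne).trans (if_pos h)

lemma component_of_gt {j k : Fin p} (h : k < j) : R.component (j, k) = 0 :=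
  (if_neg h.ne').trans (if_neg h.not_gt)

lemma toFun_eq_sum_component (x : Fin p → ℝ) :
    R.toFun x = ∑ s, (R.component s).1 (x s.1, x s.2) := by
  refine sum_add_sum_ite_lt_eq_sum (fun j ↦ ?_) (fun j k h ↦ ?_) fun j k h ↦ ?_
  · rw [component_diag]
  · rw [R.component_of_lt h]
  · rw [R.component_of_gt h]; rfl

lemma omegaGr_eq_sum_roughnessForm :
    OmegaGr R = ∑ s, roughnessForm (R.component s) (R.component s) := by
  refine sum_add_sum_ite_lt_eq_sum (fun j ↦ ?_) (fun j k h ↦ ?_) fun j k h ↦ ?_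
  · exact (Omega1_eq_roughnessForm _ fun u v ↦ by rw [component_diag]).symm
  · exact (Omega2_eq_roughnessForm _ fun u v ↦ by rw [R.component_of_lt h]).symm
  · rw [R.component_of_gt h, map_zero]

lemma omegaGr_nonneg : 0 ≤ OmegaGr R := by
  rw [omegaGr_eq_sum_roughnessForm]
  exact Finset.sum_nonneg fun s _ ↦ roughnessForm_self_nonneg _

open Classical in
/-- The pairs carrying a nonzero component of `R`. -/
def support : Finset (Fin p × Fin p) := {s | R.component s ≠ 0}

lemma component_eq_zero_of_notMem_support {s : Fin p × Fin p} (hs : s ∉ R.support) :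
    R.component s = 0 := by
  classical
  rwa [support, Finset.mem_filter_univ, not_not] at hs

lemma card_support_le_gcount : R.support.card ≤ R.Gcount := by
  classical
  have hsub : R.support ⊆ ({j | R.main j ≠ 0} : Finset (Fin p)).image (fun j ↦ (j, j)) ∪
      ({q | q.1 < q.2 ∧ R.inter q.1 q.2 ≠ 0} : Finset (Fin p × Fin p)) := by
    rintro ⟨j, k⟩ hs
    rw [support, Finset.mem_filter_univ] at hs
    rw [Finset.mem_union, Finset.mem_image, Finset.mem_filter_univ]
    obtain h | rfl | h := lt_trichotomy j k
    · refine .inr ⟨h, fun h₀ ↦ hs ?_⟩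
      rw [R.component_of_lt h]
      exact Subtype.ext (funext fun q ↦ congrFun (congrFun h₀ q.1) q.2)
    · refine .inl ⟨j, (Finset.mem_filter_univ j).2 fun h₀ ↦ hs ?_, rfl⟩
      rw [component_diag]
      exact Subtype.ext (funext fun q ↦ congrFun h₀ q.1)
    · exact absurd (R.component_of_gt h) hs
  rw [Gcount, Nat.card_eq_fintype_card, Nat.card_eq_fintype_card, Fintype.card_subtype,
    Fintype.card_subtype]
  exact (Finset.card_le_card hsub).trans ((Finset.card_union_le _ _).trans
    (Nat.add_le_add_right Finset.card_image_le _))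

end AddRep

section BasicInequality

variable {n p : ℕ} (x : Fin n → Fin p → ℝ)

lemma evalVec_sub_evalVec_eq_sum (R R₀ : AddRep p) :
    evalVec x R - evalVec x R₀ = ∑ s ∈ R.support ∪ R₀.support,
      fun i ↦ (R.component s - R₀.component s).1 (x i s.1, x i s.2) := by
  funext i
  simp only [Pi.sub_apply, evalVec, AddRep.toFun_eq_sum_component, ← Finset.sum_sub_distrib,
    Finset.sum_apply]
  refine (Finset.sum_subset (Finset.subset_univ _) fun s _ hs ↦ ?_).symm
  rw [Finset.notMem_union] at hs
  rw [R.component_eq_zero_of_notMem_support hs.1, R₀.component_eq_zero_of_notMem_support hs.2,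
    sub_self]

lemma sum_roughnessForm_component_sub_le (R R₀ : AddRep p) (S : Finset (Fin p × Fin p)) :
    ∑ s ∈ S, roughnessForm (R.component s - R₀.component s) (R.component s - R₀.component s) ≤
      2 * (OmegaGr R + OmegaGr R₀) := by
  rw [R.omegaGr_eq_sum_roughnessForm, R₀.omegaGr_eq_sum_roughnessForm, ← Finset.sum_add_distrib,
    Finset.mul_sum]
  refine (Finset.sum_le_univ_sum_of_nonneg fun s ↦ roughnessForm_self_nonneg _).trans
    (Finset.sum_le_sum fun s _ ↦ ?_)
  rw [mul_add]
  exact roughnessForm_sub_self_le _ _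

lemma normSqN_add_sub_eq (f f₀ ε : Fin n → ℝ) :
    normSqN (fun i ↦ f₀ i + ε i - f i) =
      normSqN (f - f₀) - 2 * innerN ε (f - f₀) + normSqN ε := by
  simp only [normSqN, innerN, Finset.mul_sum, ← Finset.sum_sub_distrib, ← Finset.sum_add_distrib,
    Pi.sub_apply]
  exact Finset.sum_congr rfl fun i _ ↦ by ring

lemma normSqN_add_omegaGr_le_of_objective_le {R R₀ : AddRep p} {ε : Fin n → ℝ} {lam mu : ℝ}
    (hmu : 0 ≤ mu) (h : objective x (fun i ↦ evalVec x R₀ i + ε i) lam mu R ≤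
      objective x (fun i ↦ evalVec x R₀ i + ε i) lam mu R₀) :
    normSqN (evalVec x R - evalVec x R₀) + lam * OmegaGr R ≤
      2 * innerN ε (evalVec x R - evalVec x R₀) + lam * OmegaGr R₀ + mu * R₀.Gcount := by
  have hR : 0 ≤ mu * R.Gcount := by positivity
  have hself : normSqN (fun i ↦ evalVec x R₀ i + ε i - evalVec x R₀ i) = normSqN ε := by
    simp only [add_sub_cancel_left]
  rw [objective, objective, normSqN_add_sub_eq, hself] at h
  linarith

end BasicInequality

/-- The rate `rₙ² + log(ep)/n` of the prediction error. -/
def rate (n p : ℕ) : ℝ := rn n ^ 2 + logep p / n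

section Rate

variable {n p : ℕ}

lemma rn_nonneg (n : ℕ) : 0 ≤ rn n := Real.rpow_nonneg n.cast_nonneg _

lemma rn_sq (n : ℕ) : rn n ^ 2 = (n : ℝ) ^ (-(2 / 3) : ℝ) := by
  rw [rn, ← Real.rpow_mul_natCast n.cast_nonneg]
  norm_num

lemma logep_eq_one_add_log [NeZero p] : logep p = 1 + Real.log p := by
  rw [logep, Real.log_mul (Real.exp_ne_zero 1) (NeZero.ne _), Real.log_exp]

lemma logep_nonneg [NeZero p] : 0 ≤ logep p := by
  rw [logep_eq_one_add_log]
  exact add_nonneg zero_le_one (Real.log_natCast_nonneg p)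

lemma rate_nonneg [NeZero p] : 0 ≤ rate n p :=
  add_nonneg (sq_nonneg _) (div_nonneg logep_nonneg n.cast_nonneg)

lemma rn_sq_add_rn_mul_sqrt_le_two_mul_rate [NeZero p] :
    rn n ^ 2 + rn n * Real.sqrt (logep p / n) ≤ 2 * rate n p := by
  have hsq : Real.sqrt (logep p / n) ^ 2 = logep p / n :=
    Real.sq_sqrt (div_nonneg logep_nonneg n.cast_nonneg)
  rw [rate]
  nlinarith [sq_nonneg (rn n - Real.sqrt (logep p / n)), sq_nonneg (rn n)]

lemma exists_level_le_rn_sq [NeZero n] :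
    ∃ m : ℕ, (1 : ℝ) / 16 ^ m ≤ rn n ^ 2 ∧ (4 : ℝ) ^ m ≤ 4 * (n * rn n ^ 2) := by
  have hn : (0 : ℝ) < n := Nat.cast_pos.2 (NeZero.pos n)
  have hroot : 1 ≤ (n : ℝ) ^ (1 / 3 : ℝ) :=
    Real.one_le_rpow (Nat.one_le_cast.2 (NeZero.one_le)) (by norm_num)
  obtain ⟨k, hk, hk'⟩ := exists_nat_pow_near hroot (by norm_num : (1 : ℝ) < 4)
  refine ⟨k + 1, ?_, ?_⟩
  · have h16 : (16 : ℝ) ^ (k + 1) = (4 ^ (k + 1)) ^ 2 := by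
      rw [← pow_mul, mul_comm, pow_mul]
      norm_num
    rw [rn, Real.rpow_neg hn.le, inv_pow, one_div, h16]
    gcongr
  · have hmul : n * rn n ^ 2 = (n : ℝ) ^ (1 / 3 : ℝ) := by
      rw [rn_sq, ← Real.rpow_one_add' hn.le (by norm_num)]
      norm_num
    rw [hmul, pow_succ, mul_comm]
    gcongr

end Rate

/-- The event that the noise correlates with no difference of two sparse additive functions
beyond `a / θ`, up to terms that the loss and the penalty with parameter `θ * b` can absorb. -/
def noiseEvent {n p : ℕ} (x : Fin n → Fin p → ℝ) (K : ℕ) (a b : ℝ) : Set (Fin n → ℝ) :=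
  {ε | ∀ R R₀ : AddRep p, R.Gcount ≤ K → R₀.Gcount ≤ K → ∀ θ, 0 < θ →
    2 * innerN ε (evalVec x R - evalVec x R₀) ≤ θ⁻¹ * a
      + 2 * θ * normSqN (evalVec x R - evalVec x R₀) + θ * b * (OmegaGr R + OmegaGr R₀)}

lemma noiseEvent_mono {n p K : ℕ} {x : Fin n → Fin p → ℝ} {a a' b b' : ℝ}
    (ha : a ≤ a') (hb : b ≤ b') :
    noiseEvent x K a b ⊆ noiseEvent x K a' b' := by
  intro ε hε R R₀ hR hR₀ θ hθ
  refine (hε R R₀ hR hR₀ θ hθ).trans ?_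
  have hR_nonneg := R.omegaGr_nonneg
  have hR₀_nonneg := R₀.omegaGr_nonneg
  gcongr

section NoiseEvent

variable {n p : ℕ} [NeZero n] [NeZero p] {x : Fin n → Fin p → ℝ}

lemma exists_isTraceContraction_forall_mem_noiseEvent
    (hx : ∀ i j, x i j ∈ Set.Icc (0 : ℝ) 1) (K m : ℕ) :
    ∃ N : (Fin p × Fin p) ⊕ (Fin (2 * K) → Fin p × Fin p) → Matrix (Fin n) (Fin n) ℝ,
      (∀ j, IsTraceContraction (N j) ((48 * K + 8) * 4 ^ m)) ∧
      ∀ ε U, (∀ j, ε ⬝ᵥ N j *ᵥ ε ≤ U) →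
        ε ∈ noiseEvent x K ((2 * K + 1) * U / n) (12 * (4 * K + 1) / 16 ^ m) := by
  obtain ⟨N, hN, hbound⟩ := exists_isTraceContraction_forall_two_mul_dotProduct_le
    (z := fun (s : Fin p × Fin p) i ↦ (x i s.1, x i s.2))
    (fun s i ↦ ⟨hx i s.1, hx i s.2⟩) (2 * K) m
  refine ⟨N, fun j ↦ (hN j).mono (by push_cast; linarith), fun ε U hU R R₀ hR hR₀ θ hθ ↦ ?_⟩
  have hcard : (R.support ∪ R₀.support).card ≤ 2 * K := by
    have := Finset.card_union_le R.support R₀.support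
    have := R.card_support_le_gcount
    have := R₀.card_support_le_gcount
    omega
  have hn : (0 : ℝ) < n := Nat.cast_pos.2 (NeZero.pos n)
  have hnoise := hbound ε U hU _ hcard _ _ (evalVec_sub_evalVec_eq_sum x R R₀) θ hθ
  have hrough := sum_roughnessForm_component_sub_le R R₀ (R.support ∪ R₀.support)
  set Δ := evalVec x R - evalVec x R₀
  have hinner : innerN ε Δ = (n : ℝ)⁻¹ * (ε ⬝ᵥ Δ) := by rw [innerN, one_div, dotProduct]
  have hnorm : normSqN Δ = (n : ℝ)⁻¹ * (Δ ⬝ᵥ Δ) := by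
    simp only [normSqN, one_div, dotProduct, sq]
  calc 2 * innerN ε Δ = (n : ℝ)⁻¹ * (2 * (ε ⬝ᵥ Δ)) := by rw [hinner]; ring
    _ ≤ (n : ℝ)⁻¹ * (θ⁻¹ * (((2 * K : ℕ) + 1) * U) + 2 * θ * (Δ ⬝ᵥ Δ)
        + θ * (6 * n / 16 ^ m * (2 * (2 * K : ℕ) + 1) * (2 * (OmegaGr R + OmegaGr R₀)))) := by
      rw [Fintype.card_fin] at hnoise
      refine mul_le_mul_of_nonneg_left (hnoise.trans ?_) (by positivity)
      gcongr
    _ = _ := by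
      rw [hnorm]
      push_cast
      field_simp
      ring

lemma card_mul_exp_le_one_div (K : ℕ) (D : ℝ) :
    (Fintype.card ((Fin p × Fin p) ⊕ (Fin (2 * K) → Fin p × Fin p)) : ℝ) *
      Real.exp (D / 2 - (2 * D + 4 * Real.log (2 * p ^ (4 * K + 3))) / 4) ≤ 1 / p := by
  have hp : (1 : ℝ) ≤ p := Nat.one_le_cast.2 (NeZero.one_le)
  have hexp : Real.exp (D / 2 - (2 * D + 4 * Real.log (2 * p ^ (4 * K + 3))) / 4) =
      (2 * (p : ℝ) ^ (4 * K + 3))⁻¹ := by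
    rw [← Real.exp_log (by positivity : (0 : ℝ) < 2 * p ^ (4 * K + 3)), ← Real.exp_neg,
      Real.exp_log (by positivity)]
    ring_nf
  have hcard : (Fintype.card ((Fin p × Fin p) ⊕ (Fin (2 * K) → Fin p × Fin p)) : ℝ) ≤
      2 * (p : ℝ) ^ (4 * K + 2) := by
    have hpair : (p : ℝ) ^ 2 ≤ p ^ (4 * K + 2) := pow_le_pow_right₀ hp (by omega)
    have htuple : ((p : ℝ) ^ 2) ^ (2 * K) ≤ p ^ (4 * K + 2) := by
      rw [← pow_mul]
      exact pow_le_pow_right₀ hp (by omega)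
    simp only [Fintype.card_sum, Fintype.card_prod, Fintype.card_fin, Fintype.card_fun]
    push_cast
    rw [← sq]
    linarith
  rw [hexp, ← div_eq_mul_inv, div_le_div_iff₀ (by positivity) (by positivity), pow_succ]
  nlinarith

/-- The constant in the noise level `noiseConstant K * σ² * rate n p`. -/
def noiseConstant (K : ℕ) : ℝ := (2 * K + 1) * (400 * (K + 1))

lemma quantile_le_mul_rate {K m : ℕ} (hm : (4 : ℝ) ^ m ≤ 4 * (n * rn n ^ 2)) :
    2 * ((48 * K + 8) * 4 ^ m) + 4 * Real.log (2 * p ^ (4 * K + 3)) ≤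
      400 * (K + 1) * (n * rate n p) := by
  have hn : (n : ℝ) ≠ 0 := NeZero.ne _
  have hp : (p : ℝ) ≠ 0 := NeZero.ne _
  have hlog : 0 ≤ Real.log p := Real.log_natCast_nonneg p
  have hlog_two : Real.log 2 ≤ 1 := by linarith [Real.log_two_lt_d9]
  have hrate : n * rate n p = n * rn n ^ 2 + (1 + Real.log p) := by
    rw [rate, logep_eq_one_add_log]
    field_simp
  have htail : 4 * Real.log (2 * p ^ (4 * K + 3)) ≤ 16 * (K + 1) * (1 + Real.log p) := by
    rw [Real.log_mul two_ne_zero (pow_ne_zero _ hp), Real.log_pow]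
    push_cast
    nlinarith [(K.cast_nonneg : (0 : ℝ) ≤ K)]
  have htrace : 2 * ((48 * K + 8) * 4 ^ m) ≤ 400 * ((K : ℝ) + 1) * (n * rn n ^ 2) := by
    have : 0 ≤ (n : ℝ) * rn n ^ 2 := by positivity
    calc 2 * ((48 * K + 8) * (4 : ℝ) ^ m) ≤ 2 * ((48 * K + 8) * (4 * (n * rn n ^ 2))) := by gcongr
      _ ≤ 400 * ((K : ℝ) + 1) * (n * rn n ^ 2) := by
        nlinarith [mul_nonneg (K.cast_nonneg : (0 : ℝ) ≤ K) this]
  rw [hrate]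
  nlinarith [(K.cast_nonneg : (0 : ℝ) ≤ K), mul_nonneg (K.cast_nonneg : (0 : ℝ) ≤ K) hlog]

theorem one_sub_le_gaussMeasure_noiseEvent (hx : ∀ i j, x i j ∈ Set.Icc (0 : ℝ) 1) (K : ℕ)
    {σ : ℝ} (hσ : 0 < σ) :
    ENNReal.ofReal (1 - 1 / p) ≤ gaussMeasure n σ (noiseEvent x K
      (noiseConstant K * σ ^ 2 * rate n p) (12 * (4 * K + 1) * rn n ^ 2)) := by
  have hn : (0 : ℝ) < n := Nat.cast_pos.2 (NeZero.pos n)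
  obtain ⟨m, hm_rn, hm⟩ := exists_level_le_rn_sq (n := n)
  obtain ⟨N, hN, hmem⟩ := exists_isTraceContraction_forall_mem_noiseEvent hx K m
  refine (gaussMeasure_forall_dotProduct_mulVec_le hN hσ (card_mul_exp_le_one_div K _)).trans
    (measure_mono fun ε hε ↦ noiseEvent_mono ?_ ?_ (hmem ε _ hε))
  · rw [div_le_iff₀ hn]
    calc _ ≤ (2 * K + 1) * (σ ^ 2 * (400 * (K + 1) * (n * rate n p))) := by
          gcongr
          exact quantile_le_mul_rate hm
      _ = _ := by rw [noiseConstant]; ring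
  · rw [div_eq_mul_one_div]
    gcongr

end NoiseEvent

lemma normSqN_le_of_mem_noiseEvent {n p K : ℕ} {x : Fin n → Fin p → ℝ} {ε : Fin n → ℝ}
    {a b lam mu θ : ℝ} (hε : ε ∈ noiseEvent x K a b) {R R₀ : AddRep p} (hR : R.Gcount ≤ K)
    (hR₀ : R₀.Gcount ≤ K) (hmu : 0 ≤ mu) (hθ : 0 < θ) (hθ_loss : θ ≤ 1 / 4) (hθ_lam : θ * b ≤ lam)
    (h : objective x (fun i ↦ evalVec x R₀ i + ε i) lam mu R ≤
      objective x (fun i ↦ evalVec x R₀ i + ε i) lam mu R₀) :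
    normSqN (evalVec x R - evalVec x R₀) ≤
      2 * (θ⁻¹ * a) + 4 * (lam * OmegaGr R₀) + 2 * (mu * K) := by
  have hbasic := normSqN_add_omegaGr_le_of_objective_le x hmu h
  have hnoise := hε R R₀ hR hR₀ θ hθ
  have hloss : 0 ≤ normSqN (evalVec x R - evalVec x R₀) := by
    unfold normSqN
    positivity
  have hroughness := mul_le_mul_of_nonneg_right hθ_lam
    (add_nonneg R.omegaGr_nonneg R₀.omegaGr_nonneg)
  have hcount : mu * R₀.Gcount ≤ mu * K := by gcongr
  nlinarith

/-- The value of the trade-off parameter `θ` of `noiseEvent` for which `2θ` is at most `1 / 2` and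
`λₙ ≥ c₁ σ rₙ²` dominates the roughness term. -/
def tradeoff (K : ℕ) (c₁ σ : ℝ) : ℝ := min (1 / 4) (c₁ * σ / (12 * (4 * K + 1)))

/-- The constant of the oracle inequality, as a function of the noise level `σ` and of the
roughness `w` of the truth. -/
def oracleConstant (K : ℕ) (c₁ c₂ σ w : ℝ) : ℝ :=
  2 * ((tradeoff K c₁ σ)⁻¹ * (noiseConstant K * σ ^ 2)) + 8 * (c₁ * σ * w) +
    2 * K * (c₂ * (σ ^ 2 + 2 * (c₁ * σ * w)))

lemma normSqN_le_oracleConstant_mul_rate {n p K : ℕ} [NeZero p] {c₁ c₂ σ : ℝ} (hc₁ : 0 < c₁)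
    (hc₂ : 0 ≤ c₂) (hσ : 0 < σ) {x : Fin n → Fin p → ℝ} {R R₀ : AddRep p} (hR : R.Gcount ≤ K)
    (hR₀ : R₀.Gcount ≤ K) {lam mu : ℝ}
    (hlam : lam = c₁ * σ * (rn n ^ 2 + rn n * Real.sqrt (logep p / n)))
    (hmu : mu = c₂ * σ ^ 2 * (rn n ^ 2 + logep p / n) + c₂ * lam * OmegaGr R₀) {ε : Fin n → ℝ}
    (hε : ε ∈ noiseEvent x K (noiseConstant K * σ ^ 2 * rate n p) (12 * (4 * K + 1) * rn n ^ 2))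
    (h : objective x (fun i ↦ evalVec x R₀ i + ε i) lam mu R ≤
      objective x (fun i ↦ evalVec x R₀ i + ε i) lam mu R₀) :
    normSqN (evalVec x R - evalVec x R₀) ≤
      oracleConstant K c₁ c₂ σ (OmegaGr R₀) * rate n p := by
  have hw : 0 ≤ OmegaGr R₀ := R₀.omegaGr_nonneg
  have hrate : 0 ≤ rate n p := rate_nonneg
  have hlam_ge : c₁ * σ * rn n ^ 2 ≤ lam := by
    rw [hlam]
    exact mul_le_mul_of_nonneg_left
      (le_add_of_nonneg_right (mul_nonneg (rn_nonneg n) (Real.sqrt_nonneg _))) (by positivity)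
  have hlam_nonneg : 0 ≤ lam := le_trans (by positivity) hlam_ge
  have hlam_le : lam ≤ c₁ * σ * (2 * rate n p) := by
    rw [hlam]
    gcongr
    exact rn_sq_add_rn_mul_sqrt_le_two_mul_rate
  rw [← rate] at hmu
  have hmu_le : mu ≤ c₂ * (σ ^ 2 + 2 * (c₁ * σ * OmegaGr R₀)) * rate n p := by
    calc mu ≤ c₂ * σ ^ 2 * rate n p + c₂ * (c₁ * σ * (2 * rate n p)) * OmegaGr R₀ := by
          rw [hmu]; gcongr
      _ = _ := by ring
  have hθ : 0 < tradeoff K c₁ σ := lt_min (by norm_num) (by positivity)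
  have hθ_lam : tradeoff K c₁ σ * (12 * (4 * K + 1) * rn n ^ 2) ≤ lam := by
    have hden : 0 < 12 * (4 * (K : ℝ) + 1) := by positivity
    rw [← mul_assoc]
    exact (mul_le_mul_of_nonneg_right ((le_div_iff₀ hden).1 (min_le_right _ _))
      (sq_nonneg _)).trans hlam_ge
  calc _ ≤ _ := normSqN_le_of_mem_noiseEvent hε hR hR₀ (by rw [hmu]; positivity) hθ
        (min_le_left _ _) hθ_lam h
    _ ≤ 2 * ((tradeoff K c₁ σ)⁻¹ * (noiseConstant K * σ ^ 2 * rate n p)) +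
        4 * (c₁ * σ * (2 * rate n p) * OmegaGr R₀) +
        2 * (c₂ * (σ ^ 2 + 2 * (c₁ * σ * OmegaGr R₀)) * rate n p * K) := by gcongr
    _ = _ := by rw [oracleConstant]; ring

end Census

open Census in
theorem statement3_general (K : ℕ) {c₁ c₂ : ℝ} (hc₁ : 0 < c₁) (hc₂ : 0 ≤ c₂) :
    ∃ C : ℝ → ℝ → ℝ, (∀ s w, 0 < C s w) ∧
      ∀ (n p : ℕ), 1 ≤ n → 1 ≤ p →
      ∀ (x : Fin n → Fin p → ℝ), (∀ i j, x i j ∈ Set.Icc (0 : ℝ) 1) →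
      ∀ (σ : ℝ), 0 < σ →
      ∀ (R0 : AddRep p), R0.Gcount ≤ K →
      ∀ (lam mu : ℝ),
        lam = c₁ * σ * (rn n ^ 2 + rn n * Real.sqrt (logep p / n)) →
        mu = c₂ * σ ^ 2 * (rn n ^ 2 + logep p / n) + c₂ * lam * OmegaGr R0 →
      ∀ (fhat : (Fin n → ℝ) → AddRep p),
        (∀ ε : Fin n → ℝ, (fhat ε).Gcount ≤ K ∧
          objective x (fun i ↦ evalVec x R0 i + ε i) lam mu (fhat ε) ≤
            objective x (fun i ↦ evalVec x R0 i + ε i) lam mu R0) →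
        ENNReal.ofReal (1 - 1 / (p : ℝ)) ≤
          gaussMeasure n σ
            {ε : Fin n → ℝ |
              normSqN (fun i ↦ evalVec x (fhat ε) i - evalVec x R0 i) ≤
                C σ (OmegaGr R0) * ((n : ℝ) ^ (-(2 / 3) : ℝ) + logep p / n)} := by
  refine ⟨fun σ w ↦ max 1 (oracleConstant K c₁ c₂ σ w), fun σ w ↦ lt_max_of_lt_left zero_lt_one,
    fun n p hn hp x hx σ hσ R0 hR0 lam mu hlam hmu fhat hfhat ↦ ?_⟩
  have : NeZero n := ⟨by omega⟩
  have : NeZero p := ⟨by omega⟩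
  refine (one_sub_le_gaussMeasure_noiseEvent hx K hσ).trans (measure_mono fun ε hε ↦ ?_)
  rw [Set.mem_ofPred_eq, ← rn_sq, ← rate]
  exact (normSqN_le_oracleConstant_mul_rate hc₁ hc₂ hσ (hfhat ε).1 hR0 hlam hmu hε
    (hfhat ε).2).trans (mul_le_mul_of_nonneg_right (le_max_right _ _) rate_nonneg)

open Census in
/-- Under the correctly specified model and the specific tuning choices
`λₙ = c₁σ[rₙ² + rₙ√(log(ep)/n)]`, `μₙ = c₂σ²[rₙ² + log(ep)/n] + c₂λₙΩ_gr(f°)`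
(with `c₁, c₂` the constants of the corollary, depending only on `K`), there is a constant
`C` depending only on `σ`, `Ω_gr(f°)` and `K` such that with probability at least `1-1/p`,
`‖f̂ - f*‖ₙ² ≤ C [n^{-2/3} + log(ep)/n]`. -/
theorem statement3 (K : ℕ) (hK : 1 ≤ K) :
    ∃ c₁ c₂ : ℝ, 0 < c₁ ∧ 0 < c₂ ∧
      ∃ C : ℝ → ℝ → ℝ, (∀ s w, 0 < C s w) ∧
      ∀ (n p : ℕ), 1 ≤ n → 1 ≤ p →
      ∀ (x : Fin n → Fin p → ℝ), (∀ i j, x i j ∈ Set.Icc (0:ℝ) 1) →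
      ∀ (σ : ℝ), 0 < σ →
      ∀ (R0 : AddRep p), R0.Gcount ≤ K →
      ∀ (lam mu : ℝ),
        lam = c₁ * σ * (rn n ^ 2 + rn n * Real.sqrt (logep p / n)) →
        mu = c₂ * σ ^ 2 * (rn n ^ 2 + logep p / n) + c₂ * lam * OmegaGr R0 →
      ∀ (fhat : (Fin n → ℝ) → AddRep p),
        (∀ ε : Fin n → ℝ,
          IsMinimizer K x (fun i => evalVec x R0 i + ε i) lam mu (fhat ε)) →
        ENNReal.ofReal (1 - 1 / (p : ℝ)) ≤
          gaussMeasure n σ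
            {ε : Fin n → ℝ |
              normSqN (fun i => evalVec x (fhat ε) i - evalVec x R0 i) ≤
                C σ (OmegaGr R0) * ((n : ℝ) ^ (-(2/3) : ℝ) + logep p / n)} := by
  obtain ⟨C, hC, h⟩ := statement3_general K one_pos zero_le_one
  exact ⟨1, 1, one_pos, one_pos, C, hC, fun n p hn hp x hx σ hσ R0 hR0 lam mu hlam hmu fhat hfhat ↦
    h n p hn hp x hx σ hσ R0 hR0 lam mu hlam hmu fhat fun ε ↦
      ⟨(hfhat ε).1, (hfhat ε).2 R0 hR0⟩⟩
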